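/- Let q ≥ 2 be an even integer, let λ_i > 0 for i ∈ ℕ, and let {f_n^{(i)} : n, i ∈ ℕ} be a bi-indexed family of symmetric functions in L²(ℝ₊^q) such that: ⟨f_n^{(i)}, f_n^{(j)}⟩ → δ_{ij} λ_i for all i, j; ‖f_n^{(i)} ⌢_{q/2} f_n^{(i)} − f_n^{(i)}‖ → 0 for all i; ‖f_n^{(i)} ⌢_r f_n^{(i)}‖ → 0 for all i and all 1 ≤ r ≤ q−1 with r ≠ q/2; and ‖f_n^{(i)} ⌢_r f_n^{(j)}‖ → 0 for all i ≠ j and all 1 ≤ r ≤ q−1. Then for every integer m ≥ 2 and every function χ : {1,…,m} → ℕ, the sum over all tuples (r₁,…,r_{m−1}) ∈ D_m of the scalar iterated contractions (⋯((f_n^{(χ(1))} ⌢_{r₁} f_n^{(χ(2))}) ⌢_{r₂} f_n^{(χ(3))})⋯) ⌢_{r_{m−1}} f_n^{(χ(m))} converges, as n → ∞, to Σ_{π ∈ NC_{≥2}(m), π ≤ χ} Π_{V ∈ π} λ_{χ(V)}. -/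

import Mathlib

open MeasureTheory Filter Topology

noncomputable section

/-- The positive orthant `ℝ₊ⁿ` inside `ℝⁿ`. -/
def posOrthant (n : ℕ) : Set (Fin n → ℝ) := {x | ∀ i, 0 ≤ x i}

/-- Lebesgue measure restricted to the positive orthant; the measure underlying `L²(ℝ₊ⁿ)`. -/
def μpos (n : ℕ) : MeasureTheory.Measure (Fin n → ℝ) :=
  MeasureTheory.volume.restrict (posOrthant n)

/-- Total extension of a finite tuple, giving the junk value `0` out of range. -/
def pad {k : ℕ} (t : Fin k → ℝ) (i : ℕ) : ℝ := if h : i < k then t ⟨i, h⟩ else 0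

/-- The `L²` inner product `⟨f, g⟩ = ∫ f ⬝ conj g` over the positive orthant. -/
def L2inner (n : ℕ) (f g : (Fin n → ℝ) → ℂ) : ℂ :=
  ∫ x, f x * (starRingEnd ℂ) (g x) ∂(μpos n)

/-- The `L²` norm over the positive orthant. -/
def L2norm (n : ℕ) (f : (Fin n → ℝ) → ℂ) : ℝ :=
  Real.sqrt (∫ x, ‖f x‖ ^ 2 ∂(μpos n))

/-- The adjoint `f*(t₁,…,tₙ) = conj (f (tₙ,…,t₁))`. -/
def adjF (n : ℕ) (f : (Fin n → ℝ) → ℂ) : (Fin n → ℝ) → ℂ :=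
  fun t => (starRingEnd ℂ) (f fun i => t i.rev)

/-- `f` is symmetric when `f = f*` a.e. on the positive orthant. -/
def IsSymmFn (n : ℕ) (f : (Fin n → ℝ) → ℂ) : Prop :=
  ∀ᵐ t ∂(μpos n), f t = adjF n f t

/-- Reindexing a multivariate function along an equality of dimensions. -/
def reindex {a b : ℕ} (h : a = b) (F : (Fin a → ℝ) → ℂ) : (Fin b → ℝ) → ℂ :=
  fun t => F fun j => t (Fin.cast h j)

/-- The integrand (in the `s`-variables) of the `p`-th arc contraction
`(f ⌢_p g)(t₁,…,t_{m+n-2p}) = ∫ f(t₁,…,t_{m-p},s_p,…,s₁) g(s₁,…,s_p,t_{m-p+1},…,t_{m+n-2p}) ds`. -/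
def arcKer (m n p : ℕ) (f : (Fin m → ℝ) → ℂ) (g : (Fin n → ℝ) → ℂ)
    (t : Fin (m + n - 2 * p) → ℝ) (s : Fin p → ℝ) : ℂ :=
  f (fun j => if (j : ℕ) < m - p then pad t j else pad s (m - 1 - (j : ℕ))) *
  g (fun j => if (j : ℕ) < p then pad s j else pad t (m + (j : ℕ) - 2 * p))

/-- The `p`-th arc contraction `f ⌢_p g`. -/
def arc (m n p : ℕ) (f : (Fin m → ℝ) → ℂ) (g : (Fin n → ℝ) → ℂ) :
    (Fin (m + n - 2 * p) → ℝ) → ℂ :=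
  fun t => ∫ s in posOrthant p, arcKer m n p f g t s

/-- The integrand of the star contraction of index `(p, p-1)`:
`(f ⋆_p^{p-1} g)(t₁,…,t_{m+n-2p+1})
  = ∫ f(t₁,…,t_{m-p},t_{m-p+1},s_{p-1},…,s₁) g(s₁,…,s_{p-1},t_{m-p+1},…,t_{m+n-2p+1}) ds`. -/
def starKer (m n p : ℕ) (f : (Fin m → ℝ) → ℂ) (g : (Fin n → ℝ) → ℂ)
    (t : Fin (m + n + 1 - 2 * p) → ℝ) (s : Fin (p - 1) → ℝ) : ℂ :=
  f (fun j => if (j : ℕ) < m - p + 1 then pad t j else pad s (m - 1 - (j : ℕ))) *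
  g (fun j => if (j : ℕ) < p - 1 then pad s j else pad t (m + (j : ℕ) + 1 - 2 * p))

/-- The star contraction `f ⋆_p^{p-1} g` of index `(p, p-1)`. -/
def starC (m n p : ℕ) (f : (Fin m → ℝ) → ℂ) (g : (Fin n → ℝ) → ℂ) :
    (Fin (m + n + 1 - 2 * p) → ℝ) → ℂ :=
  fun t => ∫ s in posOrthant (p - 1), starKer m n p f g t s

/-- The `q/2`-th arc contraction of two functions of `q` (even) variables,
expressed again as a function of `q` variables. -/
def contrHalf (q : ℕ) (f g : (Fin q → ℝ) → ℂ) : (Fin q → ℝ) → ℂ :=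
  fun t => ∫ s in posOrthant (q / 2),
    (f fun j => if (j : ℕ) < q - q / 2 then pad t j else pad s (q - 1 - (j : ℕ))) *
    (g fun j => if (j : ℕ) < q / 2 then pad s j else pad t (q + (j : ℕ) - 2 * (q / 2)))

/-- The full contraction `f ⌢_q g = ∫ f(t₁,…,t_q) g(t_q,…,t₁) dt` of two
functions of `q` variables. -/
def fullContr (q : ℕ) (f g : (Fin q → ℝ) → ℂ) : ℂ :=
  ∫ t in posOrthant q, f t * g fun i => t i.rev

/-- A `q`-dimensional square (cube): a product of `q` intervals of equal length. -/
def IsCube (q : ℕ) (S : Set (Fin q → ℝ)) : Prop :=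
  ∃ (a : Fin q → ℝ) (c : ℝ), S = Set.univ.pi fun i => Set.Icc (a i) (a i + c)

/-- One step of the left-bracketed iterated contraction, keeping track of the dimension. -/
def iterStep (q : ℕ) (acc : (d : ℕ) × ((Fin d → ℝ) → ℂ))
    (pr : ℕ × ((Fin q → ℝ) → ℂ)) : (d : ℕ) × ((Fin d → ℝ) → ℂ) :=
  ⟨acc.1 + q - 2 * pr.1, arc acc.1 q pr.1 acc.2 pr.2⟩

/-- The left-bracketed iterated contraction `(⋯((f₀ ⌢_{r₁} f₁) ⌢_{r₂} f₂)⋯) ⌢_{r_k} f_k`. -/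
def iterArc (q : ℕ) (f0 : (Fin q → ℝ) → ℂ) (l : List (ℕ × ((Fin q → ℝ) → ℂ))) :
    (d : ℕ) × ((Fin d → ℝ) → ℂ) :=
  l.foldl (iterStep q) ⟨q, f0⟩

/-- The value of a (`0`-dimensional, i.e. scalar) iterated contraction. -/
def scalarOf (x : (d : ℕ) × ((Fin d → ℝ) → ℂ)) : ℂ := x.2 fun _ => 0


/-- Membership in `A_m` for tuples `(r₁,…,r_{m-1}) ∈ {0,…,q}^{m-1}` (indexed here by
`Fin (m-1)`, with position `p : Fin (m-1)` standing for `r_{p+1}`):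
`r_p ≤ pq - 2(r₁+⋯+r_{p-1})` for every `p` (for `p = 1` this is `r₁ ≤ q`). -/
def memA16 (q m : ℕ) (r : Fin (m - 1) → Fin (q + 1)) : Prop :=
  ∀ p : Fin (m - 1),
    (r p : ℕ) + 2 * ∑ k ∈ Finset.univ.filter (fun k => k < p), (r k : ℕ)
      ≤ ((p : ℕ) + 1) * q

/-- Membership in `B_m`: tuples of `A_m` with `2(r₁+⋯+r_{m-1}) = mq`. -/
def memB16 (q m : ℕ) (r : Fin (m - 1) → Fin (q + 1)) : Prop :=
  memA16 q m r ∧ 2 * ∑ k, (r k : ℕ) = m * q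

/-- Membership in `D_m = B_m ∩ {0, q/2, q}^{m-1}`. -/
def memD16 (q m : ℕ) (r : Fin (m - 1) → Fin (q + 1)) : Prop :=
  memB16 q m r ∧ ∀ p, ((r p : ℕ) = 0 ∨ (r p : ℕ) = q / 2 ∨ (r p : ℕ) = q)

/-- `P` is a non-crossing partition of `{1,…,m}` (encoded on `Fin m`) all of whose blocks
have at least two elements, on the blocks of which `χ` is constant (`π ≤ χ`). -/
def IsNCge2le (m : ℕ) (χ : Fin m → ℕ) (P : Finset (Finset (Fin m))) : Prop :=
  (∀ x : Fin m, ∃ B ∈ P, x ∈ B) ∧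
  (∀ B ∈ P, ∀ B' ∈ P, B ≠ B' → Disjoint B B') ∧
  (∀ B ∈ P, 2 ≤ B.card) ∧
  (∀ B ∈ P, ∀ B' ∈ P, B ≠ B' →
    ¬ ∃ x u y v : Fin m, x < u ∧ u < y ∧ y < v ∧ x ∈ B ∧ y ∈ B ∧ u ∈ B' ∧ v ∈ B') ∧
  (∀ B ∈ P, ∀ a ∈ B, ∀ b ∈ B, χ a = χ b)


/-- stack of openers -/
def stk (q : ℕ) (r : ℕ → ℕ) : ℕ → List ℕ
  | 0 => []
  | k + 1 => if r k = 0 then k :: stk q r k else if r k = q then (stk q r k).tail else stk q r k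

def lab (q : ℕ) (r : ℕ → ℕ) (k : ℕ) : ℕ := if r k = 0 then k else (stk q r k).headD 0

lemma stk_mem_lt (q : ℕ) (r : ℕ → ℕ) (k : ℕ) : ∀ a ∈ stk q r k, a < k := by
  induction k with
  | zero => simp [stk]
  | succ k ih =>
    intro a ha
    rw [stk] at ha
    split_ifs at ha with h1 h2
    · rcases List.mem_cons.1 ha with h | h
      · omega
      · have := ih a h; omega
    · have := ih a (List.mem_of_mem_tail ha); omega
    · have := ih a ha; omega

lemma stk_sorted (q : ℕ) (r : ℕ → ℕ) (k : ℕ) : (stk q r k).Pairwise (· > ·) := by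
  induction k with
  | zero => simp [stk]
  | succ k ih =>
    rw [stk]
    split_ifs with h1 h2
    · exact List.pairwise_cons.2 ⟨fun a ha => stk_mem_lt q r k a ha, ih⟩
    · exact ih.tail
    · exact ih

lemma stk_mem_opener (q : ℕ) (r : ℕ → ℕ) (k : ℕ) : ∀ a ∈ stk q r k, r a = 0 := by
  induction k with
  | zero => simp [stk]
  | succ k ih =>
    intro a ha
    rw [stk] at ha
    split_ifs at ha with h1 h2
    · rcases List.mem_cons.1 ha with h | h
      · rw [h, h1]
      · exact ih a h
    · exact ih a (List.mem_of_mem_tail ha)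
    · exact ih a ha

/-- if `a` is in the stack at a later time, it was there earlier -/
lemma stk_back (q : ℕ) (r : ℕ → ℕ) (a k : ℕ) (hk : a < k) (h : a ∈ stk q r (k+1)) : a ∈ stk q r k := by
  rw [stk] at h
  split_ifs at h with h1 h2
  · rcases List.mem_cons.1 h with h | h
    · omega
    · exact h
  · exact List.mem_of_mem_tail h
  · exact h

lemma stk_back' (q : ℕ) (r : ℕ → ℕ) (a j k : ℕ) (hj : a < j) (hk : j ≤ k) (h : a ∈ stk q r k) :
    a ∈ stk q r j := by
  induction k, hk using Nat.le_induction with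
  | base => exact h
  | succ k hk ih => exact ih (stk_back q r a k (by omega) h)

/-- validity of a word -/
structure Val (q m : ℕ) (r : ℕ → ℕ) : Prop where
  ne : ∀ k < m, r k ≠ 0 → stk q r k ≠ []
  fin : stk q r m = []
  vals : ∀ k < m, r k = 0 ∨ r k = q / 2 ∨ r k = q

lemma lab_head {q m : ℕ} {r : ℕ → ℕ} (hv : Val q m r) {k : ℕ} (hk : k < m) (h0 : r k ≠ 0) :
    ∃ l, stk q r k = lab q r k :: l := by
  have := hv.ne k hk h0
  rw [lab, if_neg h0]
  cases hs : stk q r k with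
  | nil => exact absurd hs this
  | cons a l => exact ⟨l, by simp⟩

lemma lab_mem {q m : ℕ} {r : ℕ → ℕ} (hv : Val q m r) {k : ℕ} (hk : k < m) (h0 : r k ≠ 0) :
    lab q r k ∈ stk q r k := by
  obtain ⟨l, hl⟩ := lab_head hv hk h0
  rw [hl]; simp

lemma lab_le {q m : ℕ} {r : ℕ → ℕ} (hv : Val q m r) {k : ℕ} (hk : k < m) : lab q r k ≤ k := by
  by_cases h0 : r k = 0
  · simp [lab, h0]
  · exact (stk_mem_lt _ _ _ _ (lab_mem hv hk h0)).le

lemma lab_opener {q m : ℕ} {r : ℕ → ℕ} (hv : Val q m r) {k : ℕ} (hk : k < m) :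
    r (lab q r k) = 0 := by
  by_cases h0 : r k = 0
  · simp [lab, h0]
  · exact stk_mem_opener _ _ _ _ (lab_mem hv hk h0)

lemma lab_lab {q m : ℕ} {r : ℕ → ℕ} (hv : Val q m r) {k : ℕ} (hk : k < m) :
    lab q r (lab q r k) = lab q r k := by
  have := lab_opener hv hk
  conv_lhs => rw [lab, if_pos this]

lemma lab_eq_self {q m : ℕ} {r : ℕ → ℕ} (hv : Val q m r) {k : ℕ} (hk : k < m) :
    lab q r k = k ↔ r k = 0 := by
  constructor
  · intro h; have := lab_opener hv hk; rwa [h] at this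
  · intro h; simp [lab, h]

/-- the label stays in the stack between occurrences -/
lemma lab_between {q m : ℕ} {r : ℕ → ℕ} (hv : Val q m r) {x y k : ℕ} (hxy : x < k) (hk : k ≤ y)
    (hy : y < m) (h : lab q r x = lab q r y) : lab q r x ∈ stk q r k := by
  have hx := lab_le hv (k := x) (by omega)
  have h0 : r y ≠ 0 := by
    intro h0
    rw [(lab_eq_self hv hy).2 h0] at h
    omega
  have := lab_mem hv hy h0
  rw [← h] at this
  exact stk_back' q r _ k y (by omega) hk this

lemma head_ge {a b : ℕ} {l s : List ℕ} (hs : s.Pairwise (· > ·)) (h : s = a :: l) (hb : b ∈ s) : b ≤ a := by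
  subst h
  rcases List.mem_cons.1 hb with h | h
  · omega
  · have := (List.pairwise_cons.1 hs).1 b h; omega

lemma lab_nc {q m : ℕ} {r : ℕ → ℕ} (hv : Val q m r) {x u y v : ℕ} (h1 : x < u) (h2 : u < y)
    (h3 : y < v) (h4 : v < m) (hxy : lab q r x = lab q r y) (huv : lab q r u = lab q r v) :
    lab q r x = lab q r u := by
  have ha : lab q r x ∈ stk q r u := lab_between hv h1 h2.le (by omega) hxy
  have hb : lab q r u ∈ stk q r y := lab_between hv h2 h3.le (by omega) huv
  have hx := lab_le hv (k := x) (by omega)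
  have h0 : r y ≠ 0 := by
    intro h0
    rw [(lab_eq_self hv (by omega)).2 h0] at hxy
    omega
  obtain ⟨l, hl⟩ := lab_head hv (by omega) h0
  have e1 := head_ge (stk_sorted q r y) hl hb
  by_cases h0 : r u = 0
  · rw [(lab_eq_self hv (by omega)).2 h0] at e1
    omega
  · obtain ⟨l, hl⟩ := lab_head hv (by omega) h0
    have e2 := head_ge (stk_sorted q r u) hl ha
    omega

/-- anything in the stack at time `k` is closed later -/
lemma closed_later {q m : ℕ} {r : ℕ → ℕ} (hv : Val q m r) {a k : ℕ} (hk : k ≤ m)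
    (h : a ∈ stk q r k) : ∃ j, k ≤ j ∧ j < m ∧ lab q r j = a := by
  by_contra hc
  push Not at hc
  have : ∀ j, k ≤ j → j ≤ m → a ∈ stk q r j := by
    intro j hj
    induction j, hj using Nat.le_induction with
    | base => intro _; exact h
    | succ j hj ih =>
      intro hjm
      have ih := ih (by omega)
      rw [stk]
      split_ifs with h1 h2
      · simp [ih]
      · obtain ⟨l, hl⟩ := lab_head hv (by omega) h1
        rw [hl] at ih
        rw [hl]
        rcases List.mem_cons.1 ih with h | h
        · exact absurd h.symm (hc j hj (by omega))
        · exact h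
      · exact ih
  have := this m hk le_rfl
  rw [hv.fin] at this
  simp at this

/-- k is a closer iff it is the last with its label -/
lemma closer_iff {q m : ℕ} {r : ℕ → ℕ} (hq : 2 ≤ q) (hv : Val q m r) {k : ℕ} (hk : k < m) :
    r k = q ↔ ∀ y, y < m → lab q r k = lab q r y → y ≤ k := by
  constructor
  · intro h y hy hl
    by_contra hc
    have := lab_between hv (x := k) (y := y) (k := k+1) (by omega) (by omega) hy hl
    have h0 : r k ≠ 0 := by omega
    rw [stk, if_neg h0, if_pos h] at this
    obtain ⟨l, hl⟩ := lab_head hv hk h0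
    have hs := stk_sorted q r k
    rw [hl] at this hs
    have := (List.pairwise_cons.1 hs).1 _ this
    omega
  · intro h
    by_contra hc
    have : lab q r k ∈ stk q r (k+1) := by
      rw [stk]
      split_ifs with h1
      · simp [lab, h1]
      · exact lab_mem hv hk h1
    obtain ⟨j, hj, hjm, hl⟩ := closed_later hv (by omega) this
    have := h j hjm hl.symm
    omega

lemma exists_other {q m : ℕ} {r : ℕ → ℕ} (hv : Val q m r) {k : ℕ} (hk : k < m) :
    ∃ y, y < m ∧ y ≠ k ∧ lab q r k = lab q r y := by
  by_cases h0 : r k = 0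
  · have : k ∈ stk q r (k+1) := by rw [stk, if_pos h0]; simp
    obtain ⟨j, hj, hjm, hl⟩ := closed_later hv (by omega) this
    exact ⟨j, hjm, by omega, by rw [hl, (lab_eq_self hv hk).2 h0]⟩
  · refine ⟨lab q r k, ?_, ?_, (lab_lab hv hk).symm⟩
    · have := lab_le hv hk; omega
    · intro h; exact h0 ((lab_eq_self hv hk).1 h)

/-- Abstract NC relation. -/
structure NCR (m : ℕ) (R : ℕ → ℕ → Prop) : Prop where
  dom : ∀ x y, R x y → x < m ∧ y < m
  refl : ∀ x, x < m → R x x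
  symm : ∀ x y, R x y → R y x
  trans : ∀ x y z, R x y → R y z → R x z
  other : ∀ x, x < m → ∃ y, y ≠ x ∧ R x y
  nc : ∀ x u y v, x < u → u < y → y < v → R x y → R u v → R x u

open scoped Classical in
def rOf (q : ℕ) (R : ℕ → ℕ → Prop) (x : ℕ) : ℕ :=
  if ∀ y, R x y → x ≤ y then 0 else if ∀ y, R x y → y ≤ x then q else q / 2

lemma val_NCR {q m : ℕ} {r : ℕ → ℕ} (hv : Val q m r) :
    NCR m (fun x y => x < m ∧ y < m ∧ lab q r x = lab q r y) where
  dom := fun x y h => ⟨h.1, h.2.1⟩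
  refl := fun x h => ⟨h, h, rfl⟩
  symm := fun x y h => ⟨h.2.1, h.1, h.2.2.symm⟩
  trans := fun x y z h h' => ⟨h.1, h'.2.1, h.2.2.trans h'.2.2⟩
  other := fun x h => by
    obtain ⟨y, h1, h2, h3⟩ := exists_other hv h
    exact ⟨y, h2, h, h1, h3⟩
  nc := fun x u y v h1 h2 h3 hxy huv => ⟨hxy.1, huv.1, lab_nc hv h1 h2 h3 huv.2.1 hxy.2.2 huv.2.2⟩

lemma rOf_val {q m : ℕ} {r : ℕ → ℕ} (hq : 2 ≤ q) (hv : Val q m r) {k : ℕ} (hk : k < m) :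
    rOf q (fun x y => x < m ∧ y < m ∧ lab q r x = lab q r y) k = r k := by
  have e1 : (∀ y, (k < m ∧ y < m ∧ lab q r k = lab q r y) → k ≤ y) ↔ r k = 0 := by
    rw [← lab_eq_self hv hk]
    constructor
    · intro h
      have h1 := lab_le hv hk
      have := h (lab q r k) ⟨hk, by omega, (lab_lab hv hk).symm⟩
      omega
    · intro h y hy
      have := lab_le hv hy.2.1
      omega
  have e2 : (∀ y, (k < m ∧ y < m ∧ lab q r k = lab q r y) → y ≤ k) ↔ r k = q := by
    rw [closer_iff hq hv hk]
    constructor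
    · intro h y h1 h2; exact h y ⟨hk, h1, h2⟩
    · intro h y hy; exact h y hy.2.1 hy.2.2
  rw [rOf]
  simp only [e1, e2]
  have := hv.vals k hk
  split_ifs <;> omega

/-! Now from R to r -/

lemma rOf_eq_zero {q : ℕ} (hq : 2 ≤ q) {R : ℕ → ℕ → Prop} {x : ℕ} :
    rOf q R x = 0 ↔ ∀ y, R x y → x ≤ y := by
  rw [rOf]; split_ifs with h1 h2
  · simpa using h1
  · constructor
    · omega
    · intro h; exact absurd h h1
  · constructor
    · omega
    · intro h; exact absurd h h1

lemma rOf_eq_q {q m : ℕ} (hq : 2 ≤ q) {R : ℕ → ℕ → Prop} (hR : NCR m R) {x : ℕ} (hx : x < m) :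
    rOf q R x = q ↔ ∀ y, R x y → y ≤ x := by
  rw [rOf]; split_ifs with h1 h2
  · constructor
    · omega
    · intro h
      obtain ⟨y, hy, h3⟩ := hR.other x hx
      have := h1 y h3
      have := h y h3
      omega
  · simpa using h2
  · constructor
    · omega
    · intro h; exact absurd h h2

open scoped Classical in
def stkR (R : ℕ → ℕ → Prop) (k : ℕ) : List ℕ :=
  (List.range k).reverse.filter (fun y => (∀ z, R y z → y ≤ z) ∧ ∃ z, k ≤ z ∧ R y z)

lemma mem_stkR {R : ℕ → ℕ → Prop} {k y : ℕ} :
    y ∈ stkR R k ↔ y < k ∧ (∀ z, R y z → y ≤ z) ∧ ∃ z, k ≤ z ∧ R y z := by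
  simp [stkR]

lemma stkR_sorted (R : ℕ → ℕ → Prop) (k : ℕ) : (stkR R k).Pairwise (· > ·) := by
  refine List.Pairwise.filter _ ?_
  rw [List.pairwise_reverse]
  exact List.pairwise_lt_range

lemma sorted_ext {l l' : List ℕ} (h : l.Pairwise (· > ·)) (h' : l'.Pairwise (· > ·))
    (hm : ∀ a, a ∈ l ↔ a ∈ l') : l = l' := by
  have hp : l.Perm l' := by
    rw [List.perm_ext_iff_of_nodup]
    · exact hm
    · exact h.imp (fun h => by omega)
    · exact h'.imp (fun h => by omega)
  exact hp.eq_of_pairwise (fun a b _ _ h1 h2 => by omega) h h'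

/-- min of the class -/
lemma exists_min {m : ℕ} {R : ℕ → ℕ → Prop} (hR : NCR m R) {k : ℕ} (hk : k < m) :
    ∃ a, R a k ∧ a ≤ k ∧ ∀ z, R a z → a ≤ z := by
  classical
  have hex : ∃ a, R a k := ⟨k, hR.refl k hk⟩
  refine ⟨Nat.find hex, Nat.find_spec hex, Nat.find_min' hex (hR.refl k hk), ?_⟩
  intro z hz
  exact Nat.find_min' hex (hR.trans _ _ _ (hR.symm _ _ hz) (Nat.find_spec hex))

lemma stkR_head {m : ℕ} {R : ℕ → ℕ → Prop} (hR : NCR m R) {k a : ℕ} (hk : k < m)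
    (ha : R a k) (hmin : ∀ z, R a z → a ≤ z) (hak : a < k) : ∃ l, stkR R k = a :: l := by
  have hmem : a ∈ stkR R k := mem_stkR.2 ⟨hak, hmin, k, le_rfl, ha⟩
  cases hs : stkR R k with
  | nil => rw [hs] at hmem; simp at hmem
  | cons b l =>
    refine ⟨l, ?_⟩
    have hb : b ∈ stkR R k := by rw [hs]; simp
    have hba := head_ge (stkR_sorted R k) hs hmem
    obtain ⟨h1, h2, z, h3, h4⟩ := mem_stkR.1 hb
    rcases Nat.lt_or_ge a b with h | h
    · -- a < b < k ≤ z
      have hR' : R a b := by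
        rcases Nat.lt_or_ge k z with hz | hz
        · exact hR.nc a b k z h h1 hz ha h4
        · have : z = k := by omega
          subst this
          exact hR.trans _ _ _ ha (hR.symm _ _ h4)
      have := h2 a (hR.symm _ _ hR')
      omega
    · have : a = b := by omega
      rw [this]

lemma stk_eq_stkR {q m : ℕ} (hq : 2 ≤ q) {R : ℕ → ℕ → Prop} (hR : NCR m R) (k : ℕ) (hk : k ≤ m) :
    stk q (rOf q R) k = stkR R k := by
  induction k with
  | zero => simp [stk, stkR]
  | succ k ih =>
    have ih := ih (by omega)
    have hkm : k < m := by omega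
    refine sorted_ext (stk_sorted _ _ _) (stkR_sorted _ _) ?_
    intro y
    rw [stk, ih, mem_stkR]
    split_ifs with h1 h2
    · rw [rOf_eq_zero hq] at h1
      rw [List.mem_cons, mem_stkR]
      constructor
      · rintro (rfl | ⟨h3, h4, z, h5, h6⟩)
        · refine ⟨by omega, h1, ?_⟩
          obtain ⟨z, hz, h⟩ := hR.other y hkm
          have := h1 z h
          exact ⟨z, by omega, h⟩
        · refine ⟨by omega, h4, z, ?_, h6⟩
          by_contra hc
          have : z = k := by omega
          subst this
          have := h1 y (hR.symm _ _ h6)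
          omega
      · rintro ⟨h3, h4, z, h5, h6⟩
        by_cases hy : y = k
        · exact Or.inl hy
        · exact Or.inr ⟨by omega, h4, z, by omega, h6⟩
    · rw [rOf_eq_zero hq] at h1
      rw [rOf_eq_q hq hR hkm] at h2
      obtain ⟨a, ha, hak, hmin⟩ := exists_min hR hkm
      have hak' : a < k := by
        rcases hak.lt_or_eq with h | h
        · exact h
        · subst h; exact absurd hmin h1
      obtain ⟨l, hl⟩ := stkR_head hR hkm ha hmin hak'
      have hs := stkR_sorted R k
      have hyl : y ∈ l ↔ y ∈ stkR R k ∧ y ≠ a := by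
        rw [hl] at hs ⊢
        have := (List.pairwise_cons.1 hs).1
        constructor
        · intro h; exact ⟨by simp [h], by have := this y h; omega⟩
        · rintro ⟨h, h'⟩
          simpa [h'] using h
      rw [hl, List.tail_cons, hyl, mem_stkR]
      constructor
      · rintro ⟨⟨h3, h4, z, h5, h6⟩, h7⟩
        refine ⟨by omega, h4, z, ?_, h6⟩
        by_contra hc
        have : z = k := by omega
        subst this
        have := hmin y (hR.trans _ _ _ ha (hR.symm _ _ h6))
        have := h4 a (hR.trans _ _ _ h6 (hR.symm _ _ ha))
        omega
      · rintro ⟨h3, h4, z, h5, h6⟩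
        have hya : y ≠ a := by
          rintro rfl
          have := h2 z (hR.trans _ _ _ (hR.symm _ _ ha) h6)
          omega
        have hyk : y ≠ k := by
          rintro rfl
          have := h2 z h6
          omega
        exact ⟨⟨by omega, h4, z, by omega, h6⟩, hya⟩
    · rw [rOf_eq_zero hq] at h1
      rw [rOf_eq_q hq hR hkm] at h2
      push Not at h2
      obtain ⟨w, hw, hw2⟩ := h2
      rw [mem_stkR]
      constructor
      · rintro ⟨h3, h4, z, h5, h6⟩
        refine ⟨by omega, h4, ?_⟩
        rcases Nat.lt_or_ge k z with h | h
        · exact ⟨z, h, h6⟩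
        · have : z = k := by omega
          subst this
          exact ⟨w, hw2, hR.trans _ _ _ h6 hw⟩
      · rintro ⟨h3, h4, z, h5, h6⟩
        have hyk : y ≠ k := by
          rintro rfl
          exact h1 h4
        exact ⟨by omega, h4, z, by omega, h6⟩

lemma lab_rOf {q m : ℕ} (hq : 2 ≤ q) {R : ℕ → ℕ → Prop} (hR : NCR m R) {k : ℕ} (hk : k < m) :
    R (lab q (rOf q R) k) k ∧ (∀ z, R (lab q (rOf q R) k) z → lab q (rOf q R) k ≤ z) := by
  rw [lab]
  split_ifs with h0
  · exact ⟨hR.refl k hk, (rOf_eq_zero hq).1 h0⟩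
  · obtain ⟨a, ha, hak, hmin⟩ := exists_min hR hk
    have hak' : a < k := by
      rcases hak.lt_or_eq with h | h
      · exact h
      · subst h; exact absurd ((rOf_eq_zero hq).2 hmin) h0
    obtain ⟨l, hl⟩ := stkR_head hR hk ha hmin hak'
    rw [stk_eq_stkR hq hR k hk.le, hl]
    exact ⟨ha, hmin⟩

lemma R_iff_lab {q m : ℕ} (hq : 2 ≤ q) {R : ℕ → ℕ → Prop} (hR : NCR m R) (x y : ℕ) :
    R x y ↔ x < m ∧ y < m ∧ lab q (rOf q R) x = lab q (rOf q R) y := by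
  constructor
  · intro h
    obtain ⟨hx, hy⟩ := hR.dom x y h
    refine ⟨hx, hy, ?_⟩
    obtain ⟨a1, a2⟩ := lab_rOf hq hR hx
    obtain ⟨b1, b2⟩ := lab_rOf hq hR hy
    have := hR.trans _ _ _ (hR.trans _ _ _ a1 h) (hR.symm _ _ b1)
    exact le_antisymm (a2 _ this) (b2 _ (hR.symm _ _ this))
  · rintro ⟨hx, hy, h⟩
    obtain ⟨a1, a2⟩ := lab_rOf hq hR hx
    obtain ⟨b1, b2⟩ := lab_rOf hq hR hy
    rw [← h] at b1
    exact hR.trans _ _ _ (hR.symm _ _ a1) b1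

lemma val_rOf {q m : ℕ} (hq : 2 ≤ q) {R : ℕ → ℕ → Prop} (hR : NCR m R) : Val q m (rOf q R) where
  ne := fun k hk h0 => by
    obtain ⟨a, ha, hak, hmin⟩ := exists_min hR hk
    have hak' : a < k := by
      rcases hak.lt_or_eq with h | h
      · exact h
      · subst h; exact absurd ((rOf_eq_zero hq).2 hmin) h0
    obtain ⟨l, hl⟩ := stkR_head hR hk ha hmin hak'
    rw [stk_eq_stkR hq hR k hk.le, hl]
    simp
  fin := by
    rw [stk_eq_stkR hq hR m le_rfl, List.eq_nil_iff_forall_not_mem]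
    intro a ha
    obtain ⟨_, _, z, h1, h2⟩ := mem_stkR.1 ha
    have := (hR.dom _ _ h2).2
    omega
  vals := fun k hk => by
    rw [rOf]; split_ifs <;> simp

/-- local congruence -/
lemma stk_congr {q m : ℕ} {r r' : ℕ → ℕ} (h : ∀ k < m, r k = r' k) (k : ℕ) (hk : k ≤ m) :
    stk q r k = stk q r' k := by
  induction k with
  | zero => rfl
  | succ k ih => rw [stk, stk, ih (by omega), h k (by omega)]

lemma lab_congr {q m : ℕ} {r r' : ℕ → ℕ} (h : ∀ k < m, r k = r' k) (k : ℕ) (hk : k < m) :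
    lab q r k = lab q r' k := by
  rw [lab, lab, stk_congr h k hk.le, h k hk]

lemma val_congr {q m : ℕ} {r r' : ℕ → ℕ} (h : ∀ k < m, r k = r' k) (hv : Val q m r) : Val q m r' where
  ne := fun k hk h0 => by rw [← stk_congr h k hk.le]; exact hv.ne k hk (by rwa [h k hk])
  fin := by rw [← stk_congr h m le_rfl]; exact hv.fin
  vals := fun k hk => by rw [← h k hk]; exact hv.vals k hk

/-- length identity -/
lemma stk_len {q : ℕ} (hq : 2 ≤ q) (hqe : q % 2 = 0) {r : ℕ → ℕ} (k : ℕ)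
    (hne : ∀ j < k, r j ≠ 0 → stk q r j ≠ [])
    (hv : ∀ j < k, r j = 0 ∨ r j = q / 2 ∨ r j = q) :
    q * (stk q r k).length + 2 * ∑ j ∈ Finset.range k, r j = k * q := by
  induction k with
  | zero => simp [stk]
  | succ k ih =>
    have ih := ih (fun j hj => hne j (by omega)) (fun j hj => hv j (by omega))
    have h1 := hv k (by omega)
    have h2 := hne k (by omega)
    rw [Finset.sum_range_succ, stk]
    split_ifs with h3 h4
    · rw [List.length_cons, h3]
      linarith
    · have h2 := h2 h3
      obtain ⟨a, l, hl⟩ := List.exists_cons_of_ne_nil h2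
      rw [hl] at ih ⊢
      rw [List.length_cons] at ih
      rw [List.tail_cons, h4]
      linarith
    · have : 2 * r k = q := by omega
      linarith

def rx {q m : ℕ} (r : Fin (m - 1) → Fin (q + 1)) (k : ℕ) : ℕ :=
  if h : 1 ≤ k ∧ k < m then (r ⟨k - 1, by omega⟩ : ℕ) else 0

def cx {m : ℕ} (χ : Fin m → ℕ) (k : ℕ) : ℕ := if h : k < m then χ ⟨k, h⟩ else 0

lemma rx_zero {q m : ℕ} (r : Fin (m - 1) → Fin (q + 1)) : rx r 0 = 0 := by simp [rx]

lemma rx_succ {q m : ℕ} (r : Fin (m - 1) → Fin (q + 1)) (k : Fin (m - 1)) :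
    rx r ((k : ℕ) + 1) = r k := by
  have := k.2
  rw [rx, dif_pos (by omega)]
  rfl

lemma rx_le {q m : ℕ} (r : Fin (m - 1) → Fin (q + 1)) (k : ℕ) : rx r k ≤ q := by
  rw [rx]; split_ifs
  · exact Nat.lt_succ_iff.1 (r _).2
  · omega

lemma rx_sum_lt {q m : ℕ} (r : Fin (m - 1) → Fin (q + 1)) (p : ℕ) (hp : p ≤ m - 1) :
    ∑ k ∈ Finset.univ.filter (fun k : Fin (m - 1) => (k : ℕ) < p), (r k : ℕ) =
      ∑ j ∈ Finset.range (p + 1), rx r j := by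
  rw [Finset.sum_range_succ', rx_zero, add_zero]
  refine Finset.sum_bij (fun k _ => (k : ℕ)) ?_ ?_ ?_ ?_
  · intro k hk; simpa using hk
  · intro a _ b _ h; exact Fin.ext h
  · intro b hb
    have := Finset.mem_range.1 hb
    exact ⟨⟨b, by omega⟩, by simpa using this, rfl⟩
  · intro k _; rw [rx_succ]

lemma rx_sum {q m : ℕ} (hm : 1 ≤ m) (r : Fin (m - 1) → Fin (q + 1)) :
    ∑ k, (r k : ℕ) = ∑ j ∈ Finset.range m, rx r j := by
  have := rx_sum_lt r (m - 1) le_rfl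
  rw [show m - 1 + 1 = m by omega] at this
  rw [← this]
  congr 1
  ext k; simp

lemma memA_ne {q m : ℕ} (hq : 2 ≤ q) (hqe : q % 2 = 0) (r : Fin (m - 1) → Fin (q + 1))
    (hA : memA16 q m r) (hv : ∀ p, ((r p : ℕ) = 0 ∨ (r p : ℕ) = q / 2 ∨ (r p : ℕ) = q)) :
    (∀ k < m, rx r k = 0 ∨ rx r k = q / 2 ∨ rx r k = q) ∧
    ∀ k < m, (rx r k ≠ 0 → stk q (rx r) k ≠ []) := by
  have hvals : ∀ k < m, rx r k = 0 ∨ rx r k = q / 2 ∨ rx r k = q := by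
    intro k hk
    rw [rx]; split_ifs
    · exact hv _
    · simp
  refine ⟨hvals, ?_⟩
  intro k
  induction k using Nat.strong_induction_on with
  | _ k ih =>
    intro hk h0 hnil
    have hk0 : k ≠ 0 := by rintro rfl; exact h0 (rx_zero r)
    obtain ⟨p, rfl⟩ := Nat.exists_eq_succ_of_ne_zero hk0
    have hlen := stk_len hq hqe (r := rx r) (p + 1) (fun j hj => ih j hj (by omega))
      (fun j hj => hvals j (by omega))
    have hp : p < m - 1 := by omega
    have h1 := hA ⟨p, hp⟩
    have h2 := rx_sum_lt r p hp.le
    simp only [Fin.lt_def] at h1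
    rw [h2] at h1
    have h3 := rx_succ r ⟨p, hp⟩
    simp only [] at h3
    rw [← h3] at h1
    rw [Nat.succ_eq_add_one] at hnil h0
    rw [hnil] at hlen
    simp only [List.length_nil, mul_zero, zero_add] at hlen
    omega

lemma memD_iff {q m : ℕ} (hq : 2 ≤ q) (hqe : q % 2 = 0) (hm : 1 ≤ m)
    (r : Fin (m - 1) → Fin (q + 1)) : memD16 q m r ↔ Val q m (rx r) := by
  constructor
  · rintro ⟨⟨hA, hs⟩, hv⟩
    obtain ⟨hvals, hne⟩ := memA_ne hq hqe r hA hv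
    refine ⟨hne, ?_, hvals⟩
    have hlen := stk_len hq hqe (r := rx r) m hne hvals
    rw [← rx_sum hm r, hs] at hlen
    have : q * (stk q (rx r) m).length = 0 := by omega
    rcases Nat.mul_eq_zero.1 this with h | h
    · omega
    · exact List.length_eq_zero_iff.1 h
  · intro hv
    have hlen := fun k (hk : k ≤ m) => stk_len hq hqe (r := rx r) k
      (fun j hj => hv.ne j (by omega)) (fun j hj => hv.vals j (by omega))
    refine ⟨⟨?_, ?_⟩, ?_⟩
    · intro p
      have hp := p.2
      have h1 := hlen (p + 1) (by omega)
      rw [← rx_sum_lt r p (by omega)] at h1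
      simp only [Fin.lt_def]
      have h3 := rx_succ r p
      have h4 := hv.ne (p + 1) (by omega)
      have h5 := rx_le r (p + 1)
      rw [← h3]
      by_cases h0 : rx r (p + 1) = 0
      · omega
      · have : 1 ≤ (stk q (rx r) (p+1)).length := List.length_pos_iff.2 (h4 h0)
        have : q * 1 ≤ q * (stk q (rx r) (p+1)).length := Nat.mul_le_mul_left _ this
        omega
    · have := hlen m le_rfl
      rw [hv.fin] at this
      rw [rx_sum hm r]
      simpa using this
    · intro p
      have := hv.vals (p + 1) (by omega)
      rwa [rx_succ] at this

def wt (q : ℕ) (lam : ℕ → ℝ) (c : ℕ → ℕ) (r : ℕ → ℕ) : ℕ → ℂ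
  | 0 => 1
  | k + 1 => if r k = 0 then wt q lam c r k else
      if c (lab q r k) = c k then
        (if r k = q then wt q lam c r k * (lam (c k) : ℂ) else wt q lam c r k) else 0

open scoped Classical in
lemma wt_eq (q : ℕ) (hq : 2 ≤ q) (lam : ℕ → ℝ) (c : ℕ → ℕ) (r : ℕ → ℕ) (k : ℕ) :
    wt q lam c r k = if ∀ j < k, c (lab q r j) = c j then
      ∏ j ∈ Finset.range k, (if r j = q then (lam (c j) : ℂ) else 1) else 0 := by
  induction k with
  | zero => simp [wt]
  | succ k ih =>
    have hsplit : (∀ j < k + 1, c (lab q r j) = c j) ↔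
        (∀ j < k, c (lab q r j) = c j) ∧ c (lab q r k) = c k := by
      constructor
      · intro h; exact ⟨fun j hj => h j (by omega), h k (by omega)⟩
      · rintro ⟨h1, h2⟩ j hj
        rcases Nat.lt_succ_iff_lt_or_eq.1 hj with h | h
        · exact h1 j h
        · rw [h]; exact h2
    rw [wt, ih, Finset.prod_range_succ]
    simp only [hsplit]
    by_cases h0 : r k = 0
    · have : lab q r k = k := by simp [lab, h0]
      have h0q : (0 : ℕ) ≠ q := by omega
      simp [h0, this, h0q]
    · by_cases h1 : c (lab q r k) = c k <;> by_cases h2 : r k = q <;>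
        by_cases h3 : ∀ j < k, c (lab q r j) = c j <;> simp [h0, h1, h2, h3]
      all_goals (intros; omega)

/-- relation from a partition -/
def relP {m : ℕ} (P : Finset (Finset (Fin m))) (x y : ℕ) : Prop :=
  ∃ (hx : x < m) (hy : y < m), ∃ B ∈ P, (⟨x, hx⟩ : Fin m) ∈ B ∧ (⟨y, hy⟩ : Fin m) ∈ B

lemma relP_NCR {m : ℕ} {χ : Fin m → ℕ} {P : Finset (Finset (Fin m))} (hP : IsNCge2le m χ P) :
    NCR m (relP P) := by
  obtain ⟨hc, hd, h2, hnc, hχ⟩ := hP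
  have huniq : ∀ B ∈ P, ∀ B' ∈ P, ∀ x, x ∈ B → x ∈ B' → B = B' := by
    intro B hB B' hB' x hx hx'
    by_contra h
    exact Finset.disjoint_left.1 (hd B hB B' hB' h) hx hx'
  constructor
  · rintro x y ⟨hx, hy, _⟩; exact ⟨hx, hy⟩
  · intro x hx
    obtain ⟨B, hB, h⟩ := hc ⟨x, hx⟩
    exact ⟨hx, hx, B, hB, h, h⟩
  · rintro x y ⟨hx, hy, B, hB, h, h'⟩
    exact ⟨hy, hx, B, hB, h', h⟩
  · rintro x y z ⟨hx, hy, B, hB, h, h'⟩ ⟨_, hz, B', hB', g, g'⟩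
    have := huniq B hB B' hB' _ h' g
    subst this
    exact ⟨hx, hz, B, hB, h, g'⟩
  · intro x hx
    obtain ⟨B, hB, h⟩ := hc ⟨x, hx⟩
    obtain ⟨y, hy, hne⟩ := Finset.exists_mem_ne (h2 B hB) ⟨x, hx⟩
    exact ⟨y, fun h => hne (Fin.ext h), hx, y.2, B, hB, h, hy⟩
  · rintro x u y v h1 h2 h3 ⟨hx, hy, B, hB, g1, g2⟩ ⟨hu, hv, B', hB', g3, g4⟩
    by_contra hcon
    refine hnc B hB B' hB' ?_ ⟨⟨x, hx⟩, ⟨u, hu⟩, ⟨y, hy⟩, ⟨v, hv⟩, h1, h2, h3, g1, g2, g3, g4⟩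
    rintro rfl
    exact hcon ⟨hx, hu, B, hB, g1, g3⟩

open scoped Classical in
lemma mem_P_iff {m : ℕ} {χ : Fin m → ℕ} {P : Finset (Finset (Fin m))} (hP : IsNCge2le m χ P)
    (B : Finset (Fin m)) :
    B ∈ P ↔ ∃ x : Fin m, B = Finset.univ.filter (fun y : Fin m => relP P x y) := by
  obtain ⟨hc, hd, h2, hnc, hχ⟩ := hP
  have huniq : ∀ B ∈ P, ∀ B' ∈ P, ∀ x, x ∈ B → x ∈ B' → B = B' := by
    intro B hB B' hB' x hx hx'
    by_contra h
    exact Finset.disjoint_left.1 (hd B hB B' hB' h) hx hx'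
  have key : ∀ B ∈ P, ∀ x ∈ B, B = Finset.univ.filter (fun y : Fin m => relP P x y) := by
    intro B hB x hx
    ext y
    simp only [Finset.mem_filter, Finset.mem_univ, true_and]
    constructor
    · intro hy; exact ⟨x.2, y.2, B, hB, hx, hy⟩
    · rintro ⟨_, _, B', hB', h1, h2⟩
      rw [huniq B hB B' hB' x hx h1]; exact h2
  constructor
  · intro hB
    obtain ⟨x, hx⟩ : B.Nonempty := Finset.card_pos.1 (by have := h2 B hB; omega)
    exact ⟨x, key B hB x hx⟩
  · rintro ⟨x, rfl⟩
    obtain ⟨B, hB, h⟩ := hc x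
    rw [← key B hB x h]; exact hB

lemma rOf_le (q : ℕ) (R : ℕ → ℕ → Prop) (x : ℕ) : rOf q R x < q + 1 := by
  rw [rOf]; split_ifs <;> omega

def rP (q : ℕ) {m : ℕ} (P : Finset (Finset (Fin m))) : Fin (m - 1) → Fin (q + 1) :=
  fun k => ⟨rOf q (relP P) (k + 1), rOf_le _ _ _⟩

lemma rx_rP (q : ℕ) (hq : 2 ≤ q) {m : ℕ} (P : Finset (Finset (Fin m))) (k : ℕ) (hk : k < m) :
    rx (rP q P) k = rOf q (relP P) k := by
  cases k with
  | zero => rw [rx_zero, eq_comm, rOf_eq_zero hq]; intros; omega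
  | succ k => exact rx_succ (rP q P) ⟨k, by omega⟩

lemma relP_inj {q m : ℕ} (hq : 2 ≤ q) {χ : Fin m → ℕ} {P P' : Finset (Finset (Fin m))}
    (hP : IsNCge2le m χ P) (hP' : IsNCge2le m χ P') (h : rP q P = rP q P') : P = P' := by
  have hr : ∀ k < m, rOf q (relP P) k = rOf q (relP P') k := by
    intro k hk
    rw [← rx_rP q hq P k hk, ← rx_rP q hq P' k hk, h]
  have hrel : relP P = relP P' := by
    funext x y
    rw [eq_iff_iff, R_iff_lab hq (relP_NCR hP), R_iff_lab hq (relP_NCR hP')]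
    constructor
    · rintro ⟨hx, hy, h⟩
      exact ⟨hx, hy, by rwa [← lab_congr hr x hx, ← lab_congr hr y hy]⟩
    · rintro ⟨hx, hy, h⟩
      exact ⟨hx, hy, by rwa [lab_congr hr x hx, lab_congr hr y hy]⟩
  ext B
  rw [mem_P_iff hP, mem_P_iff hP', hrel]

open scoped Classical in
def PofR (q m : ℕ) (r : ℕ → ℕ) : Finset (Finset (Fin m)) :=
  Finset.univ.image (fun x : Fin m => Finset.univ.filter (fun y : Fin m => lab q r x = lab q r y))

lemma relP_PofR (q m : ℕ) (r : ℕ → ℕ) :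
    relP (PofR q m r) = (fun x y => x < m ∧ y < m ∧ lab q r x = lab q r y) := by
  classical
  funext x y
  rw [eq_iff_iff]
  constructor
  · rintro ⟨hx, hy, B, hB, h1, h2⟩
    rw [PofR, Finset.mem_image] at hB
    obtain ⟨z, _, rfl⟩ := hB
    rw [Finset.mem_filter] at h1 h2
    exact ⟨hx, hy, h1.2.symm.trans h2.2⟩
  · rintro ⟨hx, hy, h⟩
    refine ⟨hx, hy, _, Finset.mem_image_of_mem _ (Finset.mem_univ (⟨x, hx⟩ : Fin m)), ?_, ?_⟩
    · simp
    · simpa using h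

lemma PofR_NC {q m : ℕ} {r : ℕ → ℕ} (hv : Val q m r) (χ : Fin m → ℕ)
    (hχ : ∀ j < m, cx χ (lab q r j) = cx χ j) : IsNCge2le m χ (PofR q m r) := by
  classical
  have hmem : ∀ B, B ∈ PofR q m r ↔
      ∃ x : Fin m, Finset.univ.filter (fun y : Fin m => lab q r x = lab q r y) = B := by
    intro B; simp [PofR]
  have hR := val_NCR hv
  refine ⟨?_, ?_, ?_, ?_, ?_⟩
  · intro x
    exact ⟨_, (hmem _).2 ⟨x, rfl⟩, by simp⟩
  · intro B hB B' hB' hne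
    obtain ⟨x, rfl⟩ := (hmem B).1 hB
    obtain ⟨x', rfl⟩ := (hmem B').1 hB'
    rw [Finset.disjoint_left]
    intro a ha ha'
    simp only [Finset.mem_filter, Finset.mem_univ, true_and] at ha ha'
    exact hne (by rw [ha, ha'])
  · intro B hB
    obtain ⟨x, rfl⟩ := (hmem B).1 hB
    obtain ⟨y, h1, h2, h3⟩ := exists_other hv x.2
    rw [Nat.succ_le_iff, Finset.one_lt_card]
    refine ⟨x, by simp, ⟨y, h1⟩, by simpa using h3, ?_⟩
    intro h
    exact h2 (by rw [h])
  · rintro B hB B' hB' hne ⟨x, u, y, v, h1, h2, h3, g1, g2, g3, g4⟩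
    obtain ⟨z, rfl⟩ := (hmem B).1 hB
    obtain ⟨z', rfl⟩ := (hmem B').1 hB'
    simp only [Finset.mem_filter, Finset.mem_univ, true_and] at g1 g2 g3 g4
    have := lab_nc hv (x := x) (u := u) (y := y) (v := v) h1 h2 h3 v.2 (by rw [← g1, g2]) (by rw [← g3, g4])
    exact hne (by rw [g1, g3, this])
  · intro B hB a ha b hb
    obtain ⟨z, rfl⟩ := (hmem B).1 hB
    simp only [Finset.mem_filter, Finset.mem_univ, true_and] at ha hb
    have h1 := hχ a a.2
    have h2 := hχ b b.2
    rw [← ha] at h1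
    rw [← hb] at h2
    have := h1.symm.trans h2
    simpa [cx] using this

lemma prod_P {q m : ℕ} (hq : 2 ≤ q) (lam : ℕ → ℝ) {χ : Fin m → ℕ} {P : Finset (Finset (Fin m))}
    (hP : IsNCge2le m χ P) :
    ∏ B ∈ P, (lam (B.sup χ) : ℂ) =
      ∏ j ∈ Finset.range m, (if rOf q (relP P) j = q then (lam (cx χ j) : ℂ) else 1) := by
  have hR := relP_NCR hP
  have hP0 := hP
  obtain ⟨hc, hd, h2, hnc, hχ⟩ := hP
  have hne : ∀ B ∈ P, B.Nonempty := fun B hB => Finset.card_pos.1 (by have := h2 B hB; omega)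
  have huniq : ∀ B ∈ P, ∀ B' ∈ P, ∀ x, x ∈ B → x ∈ B' → B = B' := by
    intro B hB B' hB' x hx hx'
    by_contra h
    exact Finset.disjoint_left.1 (hd B hB B' hB' h) hx hx'
  rw [← Finset.prod_filter]
  refine Finset.prod_bij (fun B hB => ((B.max' (hne B hB) : Fin m) : ℕ)) ?_ ?_ ?_ ?_
  · intro B hB
    rw [Finset.mem_filter, Finset.mem_range]
    refine ⟨Fin.is_lt _, ?_⟩
    rw [rOf_eq_q hq hR (Fin.is_lt _)]
    rintro y ⟨_, hy, B', hB', g1, g2⟩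
    have := huniq B hB B' hB' _ (B.max'_mem (hne B hB)) g1
    subst this
    exact B.le_max' _ g2
  · intro B hB B' hB' h
    have h := Fin.ext h
    refine huniq B hB B' hB' _ (B.max'_mem (hne B hB)) ?_
    rw [h]; exact B'.max'_mem _
  · intro j hj
    rw [Finset.mem_filter, Finset.mem_range] at hj
    obtain ⟨hj, hjq⟩ := hj
    rw [rOf_eq_q hq hR hj] at hjq
    obtain ⟨B, hB, hjB⟩ := hc ⟨j, hj⟩
    refine ⟨B, hB, ?_⟩
    apply le_antisymm
    · exact hjq _ ⟨hj, Fin.is_lt _, B, hB, hjB, B.max'_mem (hne B hB)⟩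
    · exact B.le_max' _ hjB
  · intro B hB
    have : B.sup χ = cx χ ((B.max' (hne B hB) : Fin m) : ℕ) := by
      rw [cx, dif_pos (Fin.is_lt _)]
      apply le_antisymm
      · refine Finset.sup_le ?_
        intro b hb
        exact (hχ B hB b hb _ (B.max'_mem (hne B hB))).le
      · exact Finset.le_sup (f := χ) (B.max'_mem (hne B hB))
    rw [this]

open scoped Classical in
theorem comb_sum {q m : ℕ} (hq : 2 ≤ q) (hqe : q % 2 = 0) (hm : 1 ≤ m) (lam : ℕ → ℝ)
    (χ : Fin m → ℕ) :
    ∑ r ∈ Finset.univ.filter (fun r : Fin (m - 1) → Fin (q + 1) => memD16 q m r),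
      wt q lam (cx χ) (rx r) m =
    ∑ P ∈ Finset.univ.filter (fun P : Finset (Finset (Fin m)) => IsNCge2le m χ P),
        ∏ B ∈ P, (lam (B.sup χ) : ℂ) := by
  simp_rw [wt_eq q hq]
  rw [← Finset.sum_filter, Finset.filter_filter]
  symm
  refine Finset.sum_bij (fun P _ => rP q P) ?_ ?_ ?_ ?_
  · intro P hP
    simp only [Finset.mem_filter, Finset.mem_univ, true_and] at hP ⊢
    have hR := relP_NCR hP
    have hcg : ∀ k < m, rOf q (relP P) k = rx (rP q P) k := fun k hk => (rx_rP q hq P k hk).symm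
    refine ⟨(memD_iff hq hqe hm _).2 (val_congr hcg (val_rOf hq hR)), ?_⟩
    intro j hj
    rw [← lab_congr hcg j hj]
    obtain ⟨hx, hy, B, hB, h1, h2⟩ := (lab_rOf hq hR hj).1
    have := hP.2.2.2.2 B hB _ h1 _ h2
    rw [cx, cx, dif_pos hx, dif_pos hy, this]
  · intro P hP P' hP' h
    simp only [Finset.mem_filter, Finset.mem_univ, true_and] at hP hP'
    exact relP_inj hq hP hP' h
  · intro r hr
    simp only [Finset.mem_filter, Finset.mem_univ, true_and] at hr
    obtain ⟨hD, hχ⟩ := hr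
    have hv := (memD_iff hq hqe hm _).1 hD
    refine ⟨PofR q m (rx r), ?_, ?_⟩
    · simp only [Finset.mem_filter, Finset.mem_univ, true_and]
      exact PofR_NC hv χ hχ
    · funext k
      apply Fin.ext
      change rOf q (relP (PofR q m (rx r))) (k + 1) = r k
      have hk := k.2
      rw [relP_PofR, rOf_val hq hv (by omega), rx_succ]
  · intro P hP
    simp only [Finset.mem_filter, Finset.mem_univ, true_and] at hP
    rw [prod_P hq lam hP]
    refine Finset.prod_congr rfl ?_
    intro j hj
    rw [rx_rP q hq P j (Finset.mem_range.1 hj)]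


/-! ### Analysis -/

lemma two_pow_half (f : ENNReal) : (f ^ (1 / (2:ℝ))) ^ 2 = f := by
  rw [← ENNReal.rpow_natCast, ← ENNReal.rpow_mul]; norm_num

lemma eLpNorm_two_sq {α : Type*} [MeasurableSpace α] (μ : Measure α) (f : α → ℂ) :
    eLpNorm f 2 μ ^ 2 = ∫⁻ x, ‖f x‖ₑ ^ 2 ∂μ := by
  have := eLpNorm_nnreal_pow_eq_lintegral (μ := μ) (f := f) (p := 2) (by norm_num)
  have h2 : ((2 : NNReal) : ℝ) = ((2 : ℕ) : ℝ) := by norm_num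
  rw [h2] at this
  simp only [ENNReal.rpow_natCast] at this
  exact this

section abs
variable {X Y S : Type*} [MeasurableSpace X] [MeasurableSpace Y] [MeasurableSpace S]
  {μ : Measure X} {ν : Measure Y} {τ : Measure S} [SFinite μ] [SFinite ν] [SFinite τ]

lemma abs_aesm {f : X × S → ℂ} {g : Y × S → ℂ} (hf : AEStronglyMeasurable f (μ.prod τ))
    (hg : AEStronglyMeasurable g (ν.prod τ)) :
    AEStronglyMeasurable (fun p : X × Y => ∫ s, f (p.1, s) * g (p.2, s) ∂τ) (μ.prod ν) := by
  have h1 : Measure.QuasiMeasurePreserving (Prod.map Prod.fst id : (X × Y) × S → X × S)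
      ((μ.prod ν).prod τ) (μ.prod τ) :=
    MeasureTheory.QuasiMeasurePreserving.prodMap Measure.quasiMeasurePreserving_fst (Measure.QuasiMeasurePreserving.id τ)
  have h2 : Measure.QuasiMeasurePreserving (Prod.map Prod.snd id : (X × Y) × S → Y × S)
      ((μ.prod ν).prod τ) (ν.prod τ) :=
    MeasureTheory.QuasiMeasurePreserving.prodMap Measure.quasiMeasurePreserving_snd (Measure.QuasiMeasurePreserving.id τ)
  exact AEStronglyMeasurable.integral_prod_right'
    ((hf.comp_quasiMeasurePreserving h1).mul (hg.comp_quasiMeasurePreserving h2))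

lemma cs_ptwise {u v : S → ℂ} (hu : AEStronglyMeasurable u τ) (hv : AEStronglyMeasurable v τ) :
    (∫⁻ s, ‖u s * v s‖ₑ ∂τ) ^ 2 ≤ (∫⁻ s, ‖u s‖ₑ ^ 2 ∂τ) * (∫⁻ s, ‖v s‖ₑ ^ 2 ∂τ) := by
  have h := ENNReal.lintegral_mul_le_Lp_mul_Lq τ (p := 2) (q := 2)
    (by constructor <;> norm_num) hu.enorm hv.enorm
  have h2 : (2 : ℝ) = ((2 : ℕ) : ℝ) := by norm_num
  simp only [Pi.mul_apply, ← enorm_mul] at h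
  calc _ ≤ _ := pow_le_pow_left' h 2
    _ = _ := by
      rw [mul_pow, two_pow_half, two_pow_half, h2]
      simp only [ENNReal.rpow_natCast]

lemma abs_ae {f : X × S → ℂ} {g : Y × S → ℂ} (hf : AEStronglyMeasurable f (μ.prod τ))
    (hg : AEStronglyMeasurable g (ν.prod τ)) :
    ∀ᵐ p ∂(μ.prod ν), AEStronglyMeasurable (fun s => f (p.1, s)) τ ∧
      AEStronglyMeasurable (fun s => g (p.2, s)) τ := by
  have h1 := Measure.quasiMeasurePreserving_fst (μ := μ) (ν := ν) |>.ae hf.prodMk_left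
  have h2 := Measure.quasiMeasurePreserving_snd (μ := μ) (ν := ν) |>.ae hg.prodMk_left
  filter_upwards [h1, h2] with p h1 h2
  exact ⟨h1, h2⟩

lemma absc_norm {f : X × S → ℂ} {g : Y × S → ℂ} (hf : AEStronglyMeasurable f (μ.prod τ))
    (hg : AEStronglyMeasurable g (ν.prod τ)) :
    eLpNorm (fun p : X × Y => ∫ s, f (p.1, s) * g (p.2, s) ∂τ) 2 (μ.prod ν) ≤
      eLpNorm f 2 (μ.prod τ) * eLpNorm g 2 (ν.prod τ) := by
  have hfe : AEMeasurable (fun p => ‖f p‖ₑ ^ 2) (μ.prod τ) := hf.enorm.pow_const 2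
  have hge : AEMeasurable (fun p => ‖g p‖ₑ ^ 2) (ν.prod τ) := hg.enorm.pow_const 2
  rw [← ENNReal.pow_le_pow_left_iff (n := 2) (by norm_num), mul_pow, eLpNorm_two_sq, eLpNorm_two_sq,
    eLpNorm_two_sq, lintegral_prod _ hfe, lintegral_prod _ hge,
    ← lintegral_prod_mul hfe.lintegral_prod_right' hge.lintegral_prod_right']
  refine lintegral_mono_ae ?_
  filter_upwards [abs_ae hf hg] with p hp
  calc _ ≤ (∫⁻ s, ‖f (p.1, s) * g (p.2, s)‖ₑ ∂τ) ^ 2 :=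
        pow_le_pow_left' (enorm_integral_le_lintegral_enorm _) 2
    _ ≤ _ := cs_ptwise hp.1 hp.2

lemma abs_int {f : X × S → ℂ} {g : Y × S → ℂ} (hf : MemLp f 2 (μ.prod τ))
    (hg : MemLp g 2 (ν.prod τ)) :
    ∀ᵐ p ∂(μ.prod ν), Integrable (fun s => f (p.1, s) * g (p.2, s)) τ := by
  have hfe : AEMeasurable (fun p => ‖f p‖ₑ ^ 2) (μ.prod τ) := hf.1.enorm.pow_const 2
  have hge : AEMeasurable (fun p => ‖g p‖ₑ ^ 2) (ν.prod τ) := hg.1.enorm.pow_const 2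
  have h1 : ∀ᵐ x ∂μ, ∫⁻ s, ‖f (x, s)‖ₑ ^ 2 ∂τ < ⊤ := by
    refine ae_lt_top' hfe.lintegral_prod_right' ?_
    rw [← lintegral_prod _ hfe, ← eLpNorm_two_sq]
    exact ENNReal.pow_ne_top hf.2.ne
  have h2 : ∀ᵐ x ∂ν, ∫⁻ s, ‖g (x, s)‖ₑ ^ 2 ∂τ < ⊤ := by
    refine ae_lt_top' hge.lintegral_prod_right' ?_
    rw [← lintegral_prod _ hge, ← eLpNorm_two_sq]
    exact ENNReal.pow_ne_top hg.2.ne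
  have h1 := Measure.quasiMeasurePreserving_fst (μ := μ) (ν := ν) |>.ae h1
  have h2 := Measure.quasiMeasurePreserving_snd (μ := μ) (ν := ν) |>.ae h2
  filter_upwards [abs_ae hf.1 hg.1, h1, h2] with p hp h1 h2
  refine ⟨hp.1.mul hp.2, ?_⟩
  have := (cs_ptwise hp.1 hp.2).trans_lt (ENNReal.mul_lt_top h1 h2)
  rw [HasFiniteIntegral]
  by_contra hc
  rw [not_lt, top_le_iff] at hc
  rw [hc] at this
  simp at this

lemma abs_prod_norm {f : X → ℂ} {g : Y → ℂ} (hf : AEStronglyMeasurable f μ)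
    (hg : AEStronglyMeasurable g ν) :
    eLpNorm (fun p : X × Y => f p.1 * g p.2) 2 (μ.prod ν) = eLpNorm f 2 μ * eLpNorm g 2 ν := by
  have hfe : AEMeasurable (fun p => ‖f p‖ₑ ^ 2) μ := hf.enorm.pow_const 2
  have hge : AEMeasurable (fun p => ‖g p‖ₑ ^ 2) ν := hg.enorm.pow_const 2
  have : eLpNorm (fun p : X × Y => f p.1 * g p.2) 2 (μ.prod ν) ^ 2 =
      (eLpNorm f 2 μ * eLpNorm g 2 ν) ^ 2 := by
    rw [mul_pow, eLpNorm_two_sq, eLpNorm_two_sq, eLpNorm_two_sq, ← lintegral_prod_mul hfe hge]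
    simp only [enorm_mul, mul_pow]
  exact (ENNReal.pow_right_strictMono (n := 2) (by norm_num)).injective this
end abs

lemma μpos_eq_pi (n : ℕ) :
    μpos n = Measure.pi (fun _ : Fin n => (volume : Measure ℝ).restrict (Set.Ici 0)) := by
  have : posOrthant n = Set.univ.pi (fun _ : Fin n => Set.Ici (0:ℝ)) := by
    ext x; simp only [posOrthant, Set.mem_ofPred_eq, Set.mem_pi, Set.mem_univ, true_implies, Set.mem_Ici]
  rw [μpos, this, volume_pi, Measure.restrict_pi_pi]

instance (n : ℕ) : SigmaFinite (μpos n) := by rw [μpos_eq_pi]; infer_instance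

lemma pad_lt {k : ℕ} (t : Fin k → ℝ) {i : ℕ} (h : i < k) : pad t i = t ⟨i, h⟩ := by
  rw [pad, dif_pos h]

lemma exists_split {a b D : ℕ} (e : Fin a ⊕ Fin b ≃ Fin D) :
    ∃ E : ((Fin a → ℝ) × (Fin b → ℝ)) ≃ᵐ (Fin D → ℝ),
      MeasurePreserving E ((μpos a).prod (μpos b)) (μpos D) ∧
      (∀ p i, E p (e (Sum.inl i)) = p.1 i) ∧ (∀ p i, E p (e (Sum.inr i)) = p.2 i) := by
  let ν := (volume : Measure ℝ).restrict (Set.Ici 0)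
  refine ⟨(MeasurableEquiv.sumPiEquivProdPi (fun _ : Fin a ⊕ Fin b => ℝ)).symm.trans
    (MeasurableEquiv.piCongrLeft (fun _ => ℝ) e), ?_, ?_, ?_⟩
  · rw [μpos_eq_pi, μpos_eq_pi, μpos_eq_pi]
    exact (measurePreserving_piCongrLeft (fun _ : Fin D => ν) e).comp
      (measurePreserving_sumPiEquivProdPi_symm (fun _ : Fin a ⊕ Fin b => ν))
  · intro p i
    exact Equiv.piCongrLeft_apply_apply (fun _ => ℝ) e _ (Sum.inl i)
  · intro p i
    exact Equiv.piCongrLeft_apply_apply (fun _ => ℝ) e _ (Sum.inr i)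

lemma split_t {a b D : ℕ} (h : a + b = D) :
    ∃ E : ((Fin a → ℝ) × (Fin b → ℝ)) ≃ᵐ (Fin D → ℝ),
      MeasurePreserving E ((μpos a).prod (μpos b)) (μpos D) ∧
      (∀ p i, i < a → pad (E p) i = pad p.1 i) ∧ (∀ p i, pad (E p) (a + i) = pad p.2 i) := by
  obtain ⟨E, h1, h2, h3⟩ := exists_split (finSumFinEquiv.trans (finCongr h))
  refine ⟨E, h1, ?_, ?_⟩
  · intro p i hi
    rw [pad_lt _ hi, pad_lt _ (by omega), ← h2]
    congr 1
  · intro p i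
    by_cases hi : i < b
    · rw [pad_lt _ hi, pad_lt _ (by omega), ← h3]
      congr 1
    · rw [pad, pad, dif_neg hi, dif_neg (by omega)]

lemma split_F {a b D : ℕ} (h : a + b = D) :
    ∃ E : ((Fin a → ℝ) × (Fin b → ℝ)) ≃ᵐ (Fin D → ℝ),
      MeasurePreserving E ((μpos a).prod (μpos b)) (μpos D) ∧
      ∀ p, E p = fun j : Fin D => if (j:ℕ) < a then pad p.1 j else pad p.2 (D - 1 - (j:ℕ)) := by
  obtain ⟨E, h1, h2, h3⟩ := exists_split
    ((Equiv.sumCongr (Equiv.refl _) Fin.revPerm).trans (finSumFinEquiv.trans (finCongr h)))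
  refine ⟨E, h1, ?_⟩
  intro p
  funext j
  have hj := j.2
  split_ifs with hi
  · rw [pad_lt _ hi, ← h2]
    congr 1
  · have h' : D - 1 - (j:ℕ) < b := by omega
    rw [pad_lt _ h', ← h3]
    refine congrArg (E p) (Fin.ext ?_)
    simp [Fin.rev]
    omega

lemma split_g {a b D : ℕ} (h : b + a = D) :
    ∃ E : ((Fin a → ℝ) × (Fin b → ℝ)) ≃ᵐ (Fin D → ℝ),
      MeasurePreserving E ((μpos a).prod (μpos b)) (μpos D) ∧
      ∀ p, E p = fun j : Fin D => if (j:ℕ) < b then pad p.2 j else pad p.1 ((j:ℕ) - b) := by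
  obtain ⟨E, h1, h2, h3⟩ := exists_split
    ((Equiv.sumComm _ _).trans (finSumFinEquiv.trans (finCongr h)))
  refine ⟨E, h1, ?_⟩
  intro p
  funext j
  have hj := j.2
  split_ifs with hi
  · rw [pad_lt _ hi, ← h3]
    congr 1
  · have h' : (j:ℕ) - b < a := by omega
    rw [pad_lt _ h', ← h2]
    refine congrArg (E p) (Fin.ext ?_)
    simp
    omega

/-- All facts on arcs come from this factorization. -/
lemma arc_split {d q r : ℕ} (hd : r ≤ d) (hq : r ≤ q) :
    ∃ (Et : ((Fin (d - r) → ℝ) × (Fin (q - r) → ℝ)) ≃ᵐ (Fin (d + q - 2 * r) → ℝ))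
      (EF : ((Fin (d - r) → ℝ) × (Fin r → ℝ)) ≃ᵐ (Fin d → ℝ))
      (Eg : ((Fin (q - r) → ℝ) × (Fin r → ℝ)) ≃ᵐ (Fin q → ℝ)),
      MeasurePreserving Et ((μpos (d - r)).prod (μpos (q - r))) (μpos (d + q - 2 * r)) ∧
      MeasurePreserving EF ((μpos (d - r)).prod (μpos r)) (μpos d) ∧
      MeasurePreserving Eg ((μpos (q - r)).prod (μpos r)) (μpos q) ∧
      ∀ F g p s, arcKer d q r F g (Et p) s = F (EF (p.1, s)) * g (Eg (p.2, s)) := by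
  obtain ⟨Et, t1, t2, t3⟩ := split_t (a := d - r) (b := q - r) (D := d + q - 2 * r) (by omega)
  obtain ⟨EF, F1, F2⟩ := split_F (a := d - r) (b := r) (D := d) (by omega)
  obtain ⟨Eg, g1, g2⟩ := split_g (a := q - r) (b := r) (D := q) (by omega)
  refine ⟨Et, EF, Eg, t1, F1, g1, ?_⟩
  intro F g p s
  rw [arcKer, F2, g2]
  congr 2
  · funext j
    split_ifs with h
    · rw [t2 _ _ h]
    · rfl
  · funext j
    split_ifs with h
    · rfl
    · rw [← t3]; congr 1; omega

lemma arc_memLp_norm {d q r : ℕ} (hd : r ≤ d) (hq : r ≤ q) {F : (Fin d → ℝ) → ℂ}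
    {g : (Fin q → ℝ) → ℂ} (hF : AEStronglyMeasurable F (μpos d)) (hg : AEStronglyMeasurable g (μpos q)) :
    AEStronglyMeasurable (arc d q r F g) (μpos (d + q - 2 * r)) ∧
    eLpNorm (arc d q r F g) 2 (μpos (d + q - 2 * r)) ≤ eLpNorm F 2 (μpos d) * eLpNorm g 2 (μpos q) := by
  obtain ⟨Et, EF, Eg, mt, mF, mg, h⟩ := arc_split hd hq
  have hcomp : arc d q r F g ∘ Et = fun p => ∫ s, (F ∘ EF) (p.1, s) * (g ∘ Eg) (p.2, s) ∂(μpos r) := by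
    funext p
    simp only [Function.comp, arc, h]
    rfl
  have hF' : AEStronglyMeasurable (F ∘ EF) _ := hF.comp_measurePreserving mF
  have hg' : AEStronglyMeasurable (g ∘ Eg) _ := hg.comp_measurePreserving mg
  have hm : AEStronglyMeasurable (arc d q r F g) (μpos (d + q - 2 * r)) := by
    rw [← mt.aestronglyMeasurable_comp_iff Et.measurableEmbedding, hcomp]
    exact abs_aesm hF' hg'
  refine ⟨hm, ?_⟩
  rw [← eLpNorm_comp_measurePreserving hm mt, ← eLpNorm_comp_measurePreserving hF mF,
    ← eLpNorm_comp_measurePreserving hg mg, hcomp]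
  exact absc_norm hF' hg'

lemma arc_memLp {d q r : ℕ} (hd : r ≤ d) (hq : r ≤ q) {F : (Fin d → ℝ) → ℂ}
    {g : (Fin q → ℝ) → ℂ} (hF : MemLp F 2 (μpos d)) (hg : MemLp g 2 (μpos q)) :
    MemLp (arc d q r F g) 2 (μpos (d + q - 2 * r)) := by
  obtain ⟨h1, h2⟩ := arc_memLp_norm hd hq hF.1 hg.1
  exact ⟨h1, h2.trans_lt (ENNReal.mul_lt_top hF.2 hg.2)⟩

lemma arc_sub {d q r : ℕ} (hd : r ≤ d) (hq : r ≤ q) {F G : (Fin d → ℝ) → ℂ} (w : ℂ)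
    {g : (Fin q → ℝ) → ℂ} (hF : MemLp F 2 (μpos d)) (hG : MemLp G 2 (μpos d)) (hg : MemLp g 2 (μpos q)) :
    arc d q r (fun t => F t - w * G t) g =ᵐ[μpos (d + q - 2 * r)]
      fun t => arc d q r F g t - w * arc d q r G g t := by
  obtain ⟨Et, EF, Eg, mt, mF, mg, h⟩ := arc_split hd hq
  have hF' : MemLp (F ∘ EF) 2 _ := hF.comp_measurePreserving mF
  have hG' : MemLp (G ∘ EF) 2 _ := hG.comp_measurePreserving mF
  have hg' : MemLp (g ∘ Eg) 2 _ := hg.comp_measurePreserving mg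
  have key : ∀ᵐ p ∂((μpos (d - r)).prod (μpos (q - r))),
      arc d q r (fun t => F t - w * G t) g (Et p) = arc d q r F g (Et p) - w * arc d q r G g (Et p) := by
    filter_upwards [abs_int hF' hg', abs_int hG' hg'] with p h1 h2
    simp only [arc, h]
    simp only [Function.comp] at h1 h2
    change ∫ s, _ ∂(μpos r) = ∫ s, _ ∂(μpos r) - w * ∫ s, _ ∂(μpos r)
    rw [← integral_const_mul, ← integral_sub h1 (h2.const_mul w)]
    congr 1
    funext s
    ring
  have := mt.symm.quasiMeasurePreserving.ae key
  filter_upwards [this] with t ht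
  simpa using ht

lemma arc_diff {d q r : ℕ} (hd : r ≤ d) (hq : r ≤ q) {F G : (Fin d → ℝ) → ℂ} (w : ℂ)
    {g : (Fin q → ℝ) → ℂ} (hF : MemLp F 2 (μpos d)) (hG : MemLp G 2 (μpos d)) (hg : MemLp g 2 (μpos q)) :
    eLpNorm (fun t => arc d q r F g t - w * arc d q r G g t) 2 (μpos (d + q - 2 * r)) ≤
      eLpNorm (fun t => F t - w * G t) 2 (μpos d) * eLpNorm g 2 (μpos q) := by
  rw [← eLpNorm_congr_ae (arc_sub hd hq w hF hG hg)]
  exact (arc_memLp_norm hd hq (hF.1.sub (hG.1.const_mul w)) hg.1).2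

lemma prod_norm {a b D : ℕ} (h : a + b = D) {H : (Fin a → ℝ) → ℂ} {K : (Fin b → ℝ) → ℂ}
    (hH : AEStronglyMeasurable H (μpos a)) (hK : AEStronglyMeasurable K (μpos b)) :
    AEStronglyMeasurable (fun t : Fin D → ℝ => H (fun i => pad t i) * K (fun j => pad t (a + j))) (μpos D) ∧
    eLpNorm (fun t : Fin D → ℝ => H (fun i => pad t i) * K (fun j => pad t (a + j))) 2 (μpos D) =
      eLpNorm H 2 (μpos a) * eLpNorm K 2 (μpos b) := by
  obtain ⟨E, m, h1, h2⟩ := split_t h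
  have hcomp : (fun t : Fin D → ℝ => H (fun i => pad t i) * K (fun j => pad t (a + j))) ∘ E =
      fun p => H p.1 * K p.2 := by
    funext p
    simp only [Function.comp, h2]
    congr 2
    · funext i; rw [h1 _ _ i.2, pad_lt _ i.2]
    · funext i; rw [pad_lt _ i.2]
  have hm : AEStronglyMeasurable
      (fun t : Fin D → ℝ => H (fun i => pad t i) * K (fun j => pad t (a + j))) (μpos D) := by
    rw [← m.aestronglyMeasurable_comp_iff E.measurableEmbedding, hcomp]
    exact hH.comp_fst.mul hK.comp_snd
  refine ⟨hm, ?_⟩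
  rw [← eLpNorm_comp_measurePreserving hm m, hcomp]
  exact abs_prod_norm hH hK

/-- tensor product of the functions on the stack (top of the stack = last variables) -/
def tens (q : ℕ) (g : ℕ → (Fin q → ℝ) → ℂ) : List ℕ → (ℕ → ℝ) → ℂ
  | [] => fun _ => 1
  | a :: S => fun u => tens q g S u * g a (fun j => u (q * S.length + j))

lemma tens_congr (q : ℕ) (g : ℕ → (Fin q → ℝ) → ℂ) (S : List ℕ) {u v : ℕ → ℝ}
    (h : ∀ i < q * S.length, u i = v i) : tens q g S u = tens q g S v := by
  induction S with
  | nil => rfl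
  | cons a S ih =>
    rw [List.length_cons, mul_add, mul_one] at h
    simp only [tens]
    rw [ih (fun i hi => h i (by omega))]
    congr 2
    funext j
    have := j.2
    exact h _ (by omega)

lemma tens_cons_fun {q d : ℕ} (g : ℕ → (Fin q → ℝ) → ℂ) (S : List ℕ) (a : ℕ) :
    (fun t : Fin d → ℝ => tens q g (a :: S) (pad t)) =
    fun t : Fin d → ℝ => (fun x : Fin (q * S.length) → ℝ => tens q g S (pad x)) (fun i => pad t i) *
      g a (fun j => pad t (q * S.length + j)) := by
  funext t
  simp only [tens]
  congr 1
  refine tens_congr q g S ?_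
  intro i hi
  rw [pad_lt _ hi]

lemma μpos_zero : μpos 0 = Measure.dirac (fun _ => 0) := by
  rw [μpos_eq_pi]
  exact Measure.pi_of_empty _ _

lemma eLpNorm_zero_dim (F : (Fin 0 → ℝ) → ℂ) : eLpNorm F 2 (μpos 0) = ‖F (fun _ => 0)‖ₑ := by
  rw [μpos_zero, eLpNorm_dirac]
  · norm_num

lemma tens_memLp {q d : ℕ} (g : ℕ → (Fin q → ℝ) → ℂ) (hg : ∀ i, MemLp (g i) 2 (μpos q)) (S : List ℕ)
    (hd : d = q * S.length) : MemLp (fun t : Fin d → ℝ => tens q g S (pad t)) 2 (μpos d) := by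
  induction S generalizing d with
  | nil =>
    simp only [List.length_nil, mul_zero] at hd
    subst hd
    simp only [tens]
    rw [μpos_zero]
    exact memLp_const _
  | cons a S ih =>
    have ih := ih rfl
    rw [List.length_cons, mul_add, mul_one] at hd
    rw [tens_cons_fun]
    obtain ⟨h1, h2⟩ := prod_norm hd.symm ih.1 (hg a).1
    exact ⟨h1, by rw [h2]; exact ENNReal.mul_lt_top ih.2 (hg a).2⟩

lemma tens_norm_cons {q d : ℕ} (g : ℕ → (Fin q → ℝ) → ℂ) (hg : ∀ i, MemLp (g i) 2 (μpos q)) (S : List ℕ)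
    (K : (Fin q → ℝ) → ℂ) (hK : AEStronglyMeasurable K (μpos q))
    (hd : d = q * S.length + q) :
    eLpNorm (fun t : Fin d → ℝ => tens q g S (pad t) * K (fun j => pad t (q * S.length + j))) 2 (μpos d) =
      eLpNorm (fun t : Fin (q * S.length) → ℝ => tens q g S (pad t)) 2 (μpos _) * eLpNorm K 2 (μpos q) := by
  rw [← (prod_norm hd.symm (tens_memLp g hg S rfl).1 hK).2]
  congr 1
  funext t
  congr 1
  refine tens_congr q g S ?_
  intro i hi
  rw [pad_lt _ hi]

lemma tens_bdd {q : ℕ} (g : ℕ → ℕ → (Fin q → ℝ) → ℂ) (hg : ∀ n i, MemLp (g n i) 2 (μpos q))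
    (hb : ∀ i, ∃ C : NNReal, ∀ᶠ n in atTop, eLpNorm (g n i) 2 (μpos q) ≤ C) (S : List ℕ) :
    ∃ C : NNReal, ∀ᶠ n in atTop,
      eLpNorm (fun t : Fin (q * S.length) → ℝ => tens q (g n) S (pad t)) 2 (μpos _) ≤ C := by
  induction S with
  | nil =>
    refine ⟨1, Eventually.of_forall fun n => ?_⟩
    simp only [tens]
    change eLpNorm (fun t : Fin 0 → ℝ => (1:ℂ)) 2 (μpos 0) ≤ _
    rw [eLpNorm_zero_dim]
    simp
  | cons a S ih =>
    obtain ⟨C, hC⟩ := ih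
    obtain ⟨C', hC'⟩ := hb a
    refine ⟨C * C', ?_⟩
    filter_upwards [hC, hC'] with n h1 h2
    have := tens_norm_cons (g n) (hg n) S (g n a) (hg n a).1 (d := q * (a :: S).length)
      (by rw [List.length_cons, mul_add, mul_one])
    simp only [tens]
    rw [this, ENNReal.coe_mul]
    exact mul_le_mul' h1 h2

/-- push -/
lemma arc_push {q d : ℕ} (g : ℕ → (Fin q → ℝ) → ℂ) (S : List ℕ) (a : ℕ) (hd : d = q * S.length)
    (t : Fin (d + q - 2 * 0) → ℝ) :
    arc d q 0 (fun t => tens q g S (pad t)) (g a) t = tens q g (a :: S) (pad t) := by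
  change ∫ s, arcKer d q 0 (fun t => tens q g S (pad t)) (g a) t s ∂(μpos 0) = _
  rw [μpos_zero, integral_dirac, arcKer, tens]
  congr 1
  · refine tens_congr q g S ?_
    intro i hi
    rw [pad_lt _ (by omega : i < d), if_pos (by simp; omega)]
  · congr 1
    funext j
    rw [if_neg (by omega)]
    congr 1
    omega

/-- contraction only acts on the top of the stack -/
lemma arc_top {q d r : ℕ} (hr : r ≤ q) (g : ℕ → (Fin q → ℝ) → ℂ) (S : List ℕ) (a : ℕ)
    (hd : d = q * S.length + q) (h : (Fin q → ℝ) → ℂ)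
    (t : Fin (d + q - 2 * r) → ℝ) :
    arc d q r (fun t => tens q g (a :: S) (pad t)) h t =
      tens q g S (pad t) * arc q q r (g a) h (fun j => pad t (q * S.length + j)) := by
  simp only [arc]
  rw [← integral_const_mul]
  congr 1
  funext s
  simp only [arcKer, tens]
  rw [mul_assoc]
  congr 1
  · refine tens_congr q g S ?_
    intro i hi
    rw [pad_lt _ (by omega : i < d), if_pos (by simp; omega)]
  · congr 2
    · funext j
      have hj := j.2
      rw [pad_lt _ (by omega : q * S.length + (j:ℕ) < d)]
      simp only []
      by_cases h1 : (j:ℕ) < q - r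
      · rw [if_pos h1, if_pos (by omega), pad_lt _ (by omega : (j:ℕ) < q + q - 2 * r)]
      · rw [if_neg h1, if_neg (by omega)]
        congr 1
        omega
    · funext j
      have hj := j.2
      split_ifs with h1
      · rfl
      · rw [pad_lt _ (by omega : q + (j:ℕ) - 2 * r < q + q - 2 * r)]
        simp only []
        congr 1
        omega

lemma mp_rev (q : ℕ) : MeasurePreserving (fun (s : Fin q → ℝ) (j : Fin q) => s j.rev) (μpos q) (μpos q) := by
  rw [μpos_eq_pi]
  have := measurePreserving_piCongrLeft (fun _ : Fin q => (volume : Measure ℝ).restrict (Set.Ici 0))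
    (Fin.revPerm)
  convert this using 1
  funext s j
  have := Equiv.piCongrLeft_apply_apply (fun _ => ℝ) (Fin.revPerm) s j.rev
  simp only [Fin.revPerm_apply, Fin.rev_rev] at this
  exact this.symm

lemma rev_emb (q : ℕ) : MeasurableEmbedding (fun (s : Fin q → ℝ) (j : Fin q) => s j.rev) := by
  have h := (MeasurableEquiv.piCongrLeft (fun _ : Fin q => ℝ) (Fin.revPerm)).measurableEmbedding
  convert h using 1
  funext s j
  have := Equiv.piCongrLeft_apply_apply (fun _ => ℝ) (Fin.revPerm) s j.rev
  simp only [Fin.revPerm_apply, Fin.rev_rev] at this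
  exact this.symm

lemma arc_full {q : ℕ} (h g : (Fin q → ℝ) → ℂ) (hg : IsSymmFn q g) (t : Fin (q + q - 2 * q) → ℝ) :
    arc q q q h g t = L2inner q h g := by
  change ∫ s, arcKer q q q h g t s ∂(μpos q) = _
  rw [L2inner, ← (mp_rev q).integral_comp (rev_emb q)]
  refine integral_congr_ae ?_
  filter_upwards [hg] with s hs
  simp only [arcKer]
  congr 1
  · congr 1
    funext j
    have hj := j.2
    rw [if_neg (by omega), pad_lt _ (by omega : q - 1 - (j:ℕ) < q)]
    congr 1
    apply Fin.ext
    simp [Fin.rev]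
    omega
  · have e : (fun j : Fin q => if (j:ℕ) < q then pad (fun j : Fin q => s j.rev) j
        else pad t (q + j - 2 * q)) = fun j => s j.rev := by
      funext j
      rw [if_pos j.2, pad_lt _ j.2]
    rw [e]
    have := congrArg (starRingEnd ℂ) hs
    simp only [adjF, Complex.conj_conj] at this
    exact this.symm

lemma L2norm_tendsto {d : ℕ} {K : ℕ → (Fin d → ℝ) → ℂ} (hK : ∀ n, MemLp (K n) 2 (μpos d))
    (h : Tendsto (fun n => L2norm d (K n)) atTop (nhds 0)) :
    Tendsto (fun n => eLpNorm (K n) 2 (μpos d)) atTop (nhds 0) := by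
  have : ∀ n, eLpNorm (K n) 2 (μpos d) = ENNReal.ofReal (L2norm d (K n)) := by
    intro n
    rw [(hK n).eLpNorm_eq_integral_rpow_norm (by norm_num) (by norm_num), L2norm, Real.sqrt_eq_rpow]
    norm_num
  simp only [this]
  have := ENNReal.tendsto_ofReal h
  simpa using this

lemma norm_bdd {q : ℕ} {K : ℕ → (Fin q → ℝ) → ℂ} (hK : ∀ n, MemLp (K n) 2 (μpos q)) {l : ℂ}
    (h : Tendsto (fun n => L2inner q (K n) (K n)) atTop (nhds l)) :
    ∃ C : NNReal, ∀ᶠ n in atTop, eLpNorm (K n) 2 (μpos q) ≤ C := by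
  have h1 : ∀ n, L2inner q (K n) (K n) = ((∫ x, ‖K n x‖ ^ 2 ∂(μpos q) : ℝ) : ℂ) := by
    intro n
    rw [L2inner, ← integral_complex_ofReal]
    congr 1
    funext x
    rw [Complex.mul_conj, Complex.normSq_eq_norm_sq]
  have h2 : Tendsto (fun n => L2norm q (K n)) atTop (nhds (Real.sqrt l.re)) := by
    have := (Complex.continuous_re.tendsto l).comp h
    have := (Real.continuous_sqrt.tendsto _).comp this
    refine this.congr ?_
    intro n
    simp only [Function.comp, h1, Complex.ofReal_re, L2norm]
  have h3 : ∀ n, eLpNorm (K n) 2 (μpos q) = ENNReal.ofReal (L2norm q (K n)) := by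
    intro n
    rw [(hK n).eLpNorm_eq_integral_rpow_norm (by norm_num) (by norm_num), L2norm, Real.sqrt_eq_rpow]
    norm_num
  refine ⟨Real.toNNReal (Real.sqrt l.re + 1), ?_⟩
  filter_upwards [h2.eventually_lt_const (lt_add_one (Real.sqrt l.re))] with n hn
  rw [h3]
  exact ENNReal.ofReal_le_ofReal hn.le

lemma reindex_norm {a b : ℕ} (h : a = b) (F : (Fin a → ℝ) → ℂ) :
    L2norm b (reindex h F) = L2norm a F := by
  subst h; rfl

lemma reindex_memLp {a b : ℕ} (h : a = b) {F : (Fin a → ℝ) → ℂ} (hF : MemLp F 2 (μpos a)) :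
    MemLp (reindex h F) 2 (μpos b) := by
  subst h; exact hF

/-- bounded times null -/
lemma tendsto_mul_zero {u v : ℕ → ENNReal} {C : NNReal} (hu : ∀ᶠ n in atTop, u n ≤ C)
    (hv : Tendsto v atTop (nhds 0)) : Tendsto (fun n => u n * v n) atTop (nhds 0) := by
  have h1 : Tendsto (fun n => (C : ENNReal) * v n) atTop (nhds 0) := by
    have := ENNReal.Tendsto.const_mul hv (a := (C : ENNReal)) (Or.inr ENNReal.coe_ne_top)
    simpa using this
  refine tendsto_of_tendsto_of_tendsto_of_le_of_le' tendsto_const_nhds h1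
    (Eventually.of_forall fun n => zero_le) ?_
  filter_upwards [hu] with n hn
  exact mul_le_mul' hn le_rfl

/-- recursive accumulator -/
def accN (q : ℕ) (g : ℕ → (Fin q → ℝ) → ℂ) (r : ℕ → ℕ) : ℕ → (d : ℕ) × ((Fin d → ℝ) → ℂ)
  | 0 => ⟨q, g 0⟩
  | k + 1 => iterStep q (accN q g r k) (r (k + 1), g (k + 1))

lemma iterArc_ofFn (q : ℕ) (g : ℕ → (Fin q → ℝ) → ℂ) (r : ℕ → ℕ) (N : ℕ) :
    iterArc q (g 0) (List.ofFn fun k : Fin N => (r ((k:ℕ) + 1), g ((k:ℕ) + 1))) = accN q g r N := by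
  induction N with
  | zero => simp [iterArc, accN]
  | succ N ih =>
    rw [accN, ← ih, iterArc, iterArc, List.ofFn_succ', List.concat_eq_append, List.foldl_append]
    rfl

lemma tendsto_const_mul_zero {v : ℕ → ENNReal} (w : ℂ) (hv : Tendsto v atTop (nhds 0)) :
    Tendsto (fun n => ‖w‖ₑ * v n) atTop (nhds 0) := by
  have := ENNReal.Tendsto.const_mul hv (a := ‖w‖ₑ) (Or.inr (by simp))
  simpa using this

lemma eLpNorm_cmul {d : ℕ} (w : ℂ) (F : (Fin d → ℝ) → ℂ) :
    eLpNorm (fun t => w * F t) 2 (μpos d) = ‖w‖ₑ * eLpNorm F 2 (μpos d) :=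
  eLpNorm_const_smul w F 2 (μpos d)

lemma step_K {q : ℕ} (g : ℕ → ℕ → (Fin q → ℝ) → ℂ) (hg : ∀ n i, MemLp (g n i) 2 (μpos q))
    (hb : ∀ i, ∃ C : NNReal, ∀ᶠ n in atTop, eLpNorm (g n i) 2 (μpos q) ≤ C)
    (S : List ℕ) (w : ℂ) {D : ℕ} (hD : D = q * S.length + q)
    (K : ℕ → (Fin q → ℝ) → ℂ) (hK : ∀ n, MemLp (K n) 2 (μpos q))
    (h : Tendsto (fun n => L2norm q (K n)) atTop (nhds 0)) :
    Tendsto (fun n => eLpNorm (fun t : Fin D → ℝ =>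
      w * (tens q (g n) S (pad t) * K n (fun j => pad t (q * S.length + j)))) 2 (μpos D))
      atTop (nhds 0) := by
  simp only [eLpNorm_cmul]
  refine tendsto_const_mul_zero w ?_
  have e : ∀ n, _ := fun n => tens_norm_cons (g n) (hg n) S (K n) (hK n).1 hD
  simp only [e]
  obtain ⟨C, hC⟩ := tens_bdd g hg hb S
  exact tendsto_mul_zero hC (L2norm_tendsto hK h)

lemma step_half_same {q : ℕ} (g : ℕ → ℕ → (Fin q → ℝ) → ℂ) (hg : ∀ n i, MemLp (g n i) 2 (μpos q))
    (hb : ∀ i, ∃ C : NNReal, ∀ᶠ n in atTop, eLpNorm (g n i) 2 (μpos q) ≤ C)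
    (hqe : q % 2 = 0) (hh : q + q - 2 * (q / 2) = q) (S : List ℕ) (a b : ℕ) (w : ℂ) {d : ℕ} (hd : d = q * S.length + q)
    (h : Tendsto (fun n => L2norm q (fun t =>
        reindex hh
          (arc q q (q / 2) (g n a) (g n b)) t - g n a t)) atTop (nhds 0)) :
    Tendsto (fun n => eLpNorm (fun t => w * arc d q (q / 2) (fun t => tens q (g n) (a :: S) (pad t)) (g n b) t
      - w * tens q (g n) (a :: S) (pad t)) 2 (μpos (d + q - 2 * (q / 2)))) atTop (nhds 0) := by
  have := step_K g hg hb S w (D := d + q - 2 * (q / 2)) (by omega) _ (fun n =>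
    (reindex_memLp hh
      (arc_memLp (by omega) (by omega) (hg n a) (hg n b))).sub (hg n a)) h
  refine this.congr ?_
  intro n
  congr 1
  funext t
  rw [arc_top (by omega) (g n) S a hd]
  simp only [tens, reindex, Pi.sub_apply, Fin.val_cast]
  ring

lemma step_half_diff {q : ℕ} (g : ℕ → ℕ → (Fin q → ℝ) → ℂ) (hg : ∀ n i, MemLp (g n i) 2 (μpos q))
    (hb : ∀ i, ∃ C : NNReal, ∀ᶠ n in atTop, eLpNorm (g n i) 2 (μpos q) ≤ C)
    (hqe : q % 2 = 0) (hh : q + q - 2 * (q / 2) = q) (S S' : List ℕ) (a b : ℕ) (w : ℂ) {d : ℕ} (hd : d = q * S.length + q)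
    (h : Tendsto (fun n => L2norm (q + q - 2 * (q / 2)) (arc q q (q / 2) (g n a) (g n b))) atTop (nhds 0)) :
    Tendsto (fun n => eLpNorm (fun t => w * arc d q (q / 2) (fun t => tens q (g n) (a :: S) (pad t)) (g n b) t
      - 0 * tens q (g n) S' (pad t)) 2 (μpos (d + q - 2 * (q / 2)))) atTop (nhds 0) := by
  have h' : Tendsto (fun n => L2norm q (reindex hh
      (arc q q (q / 2) (g n a) (g n b)))) atTop (nhds 0) := by
    simpa only [reindex_norm] using h
  have := step_K g hg hb S w (D := d + q - 2 * (q / 2)) (by omega) _ (fun n =>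
    (reindex_memLp hh
      (arc_memLp (by omega) (by omega) (hg n a) (hg n b)))) h'
  refine this.congr ?_
  intro n
  congr 1
  funext t
  rw [arc_top (by omega) (g n) S a hd]
  simp only [reindex, Fin.val_cast]
  ring

lemma step_full {q : ℕ} (g : ℕ → ℕ → (Fin q → ℝ) → ℂ) (hg : ∀ n i, MemLp (g n i) 2 (μpos q))
    (hb : ∀ i, ∃ C : NNReal, ∀ᶠ n in atTop, eLpNorm (g n i) 2 (μpos q) ≤ C)
    (S : List ℕ) (a b : ℕ) (w l : ℂ) {d : ℕ} (hd : d = q * S.length + q)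
    (hs : ∀ n, IsSymmFn q (g n b))
    (h : Tendsto (fun n => L2inner q (g n a) (g n b)) atTop (nhds l)) :
    Tendsto (fun n => eLpNorm (fun t => w * arc d q q (fun t => tens q (g n) (a :: S) (pad t)) (g n b) t
      - w * l * tens q (g n) S (pad t)) 2 (μpos (d + q - 2 * q))) atTop (nhds 0) := by
  have key : ∀ D : ℕ, D = q * S.length → Tendsto (fun n => eLpNorm (fun t : Fin D → ℝ =>
      (w * (L2inner q (g n a) (g n b) - l)) * tens q (g n) S (pad t)) 2 (μpos D)) atTop (nhds 0) := by
    intro D hD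
    subst hD
    simp only [eLpNorm_cmul]
    obtain ⟨C, hC⟩ := tens_bdd g hg hb S
    have h0 : Tendsto (fun n => ‖w * (L2inner q (g n a) (g n b) - l)‖ₑ) atTop (nhds 0) := by
      have := ((h.sub_const l).const_mul w).enorm
      simpa using this
    have := tendsto_mul_zero hC h0
    refine this.congr fun n => mul_comm _ _
  refine (key (d + q - 2 * q) (by omega)).congr ?_
  intro n
  congr 1
  funext t
  rw [arc_top le_rfl (g n) S a hd, arc_full _ _ (hs n)]
  ring

/-- the inductive invariant -/
def StackInv (q : ℕ) (g : ℕ → ℕ → (Fin q → ℝ) → ℂ) (r : ℕ → ℕ) (w : ℂ) (S : List ℕ) (k : ℕ) : Prop :=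
  ∃ (d : ℕ) (F : ℕ → (Fin d → ℝ) → ℂ), d = q * S.length ∧ (∀ n, accN q (g n) r k = ⟨d, F n⟩) ∧
    (∀ n, MemLp (F n) 2 (μpos d)) ∧
    Tendsto (fun n => eLpNorm (fun t => F n t - w * tens q (g n) S (pad t)) 2 (μpos d)) atTop (nhds 0)

lemma inv_step {q : ℕ} (g : ℕ → ℕ → (Fin q → ℝ) → ℂ) (hg : ∀ n i, MemLp (g n i) 2 (μpos q))
    (hb : ∀ i, ∃ C : NNReal, ∀ᶠ n in atTop, eLpNorm (g n i) 2 (μpos q) ≤ C)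
    (r : ℕ → ℕ) (w w' : ℂ) (S S' : List ℕ) (k : ℕ) (hr : r (k + 1) ≤ q)
    (hrS : r (k + 1) ≤ q * S.length)
    (hS' : q * S.length + q - 2 * r (k + 1) = q * S'.length)
    (hI : StackInv q g r w S k)
    (h2 : ∀ d, d = q * S.length → Tendsto (fun n => eLpNorm (fun t =>
      w * arc d q (r (k + 1)) (fun t => tens q (g n) S (pad t)) (g n (k + 1)) t
      - w' * tens q (g n) S' (pad t)) 2 (μpos (d + q - 2 * r (k + 1)))) atTop (nhds 0)) :
    StackInv q g r w' S' (k + 1) := by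
  obtain ⟨d, F, hd, hacc, hmem, hlim⟩ := hI
  refine ⟨d + q - 2 * r (k + 1), fun n => arc d q (r (k + 1)) (F n) (g n (k + 1)), ?_, ?_, ?_, ?_⟩
  · rw [hd, hS']
  · intro n
    rw [accN, hacc n, iterStep]
  · intro n
    exact arc_memLp (by omega) hr (hmem n) (hg n _)
  · obtain ⟨C, hC⟩ := hb (k + 1)
    have h1 := tendsto_mul_zero hC hlim
    have h12 := h1.add (h2 d hd)
    rw [add_zero] at h12
    refine tendsto_of_tendsto_of_tendsto_of_le_of_le tendsto_const_nhds h12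
      (fun n => zero_le) ?_
    intro n
    have mT := tens_memLp (g n) (hg n) S hd
    have m1 := arc_memLp (by omega) hr (hmem n) (hg n (k + 1))
    have m2 := (arc_memLp (by omega) hr mT (hg n (k + 1))).const_mul w
    have m3 := (tens_memLp (g n) (hg n) S' (d := d + q - 2 * r (k + 1)) (by rw [hd, hS'])).const_mul w'
    have ha := eLpNorm_add_le (p := 2) (m1.sub m2).1 (m2.sub m3).1 (by norm_num)
    have hdiff := arc_diff (by omega) hr w (hmem n) mT (hg n (k + 1))
    replace hdiff := hdiff.trans (mul_comm _ _).le
    have h3 := ha.trans (add_le_add hdiff le_rfl)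
    refine le_trans (le_of_eq (congrArg (fun H => eLpNorm H 2 (μpos (d + q - 2 * r (k + 1)))) ?_)) h3
    funext t
    simp only [Pi.add_apply, Pi.sub_apply]
    exact (sub_add_sub_cancel _ _ _).symm

theorem inv_all {q m : ℕ} (hq : 2 ≤ q) (hqe : q % 2 = 0) (hh : q + q - 2 * (q / 2) = q) (lam : ℕ → ℝ)
    (f : ℕ → ℕ → (Fin q → ℝ) → ℂ)
    (hmem : ∀ n i, MemLp (f n i) 2 (μpos q))
    (hsym : ∀ n i, IsSymmFn q (f n i))
    (hinner : ∀ i j, Tendsto (fun n => L2inner q (f n i) (f n j)) atTop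
      (nhds (if i = j then (lam i : ℂ) else 0)))
    (hdiag : ∀ i, Tendsto (fun n => L2norm q (fun t =>
        reindex hh
          (arc q q (q / 2) (f n i) (f n i)) t - f n i t)) atTop (nhds 0))
    (hoff : ∀ i j, i ≠ j → ∀ r, 1 ≤ r → r ≤ q - 1 →
      Tendsto (fun n => L2norm (q + q - 2 * r) (arc q q r (f n i) (f n j))) atTop (nhds 0))
    (c r : ℕ → ℕ) (hr0 : r 0 = 0) (hv : Val q m r) (k : ℕ) (hk : k < m) :
    StackInv q (fun n j => f n (c j)) r (wt q lam c r (k + 1)) (stk q r (k + 1)) k := by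
  have hg : ∀ n i, MemLp (f n (c i)) 2 (μpos q) := fun n i => hmem n _
  have hb : ∀ i, ∃ C : NNReal, ∀ᶠ n in atTop, eLpNorm (f n (c i)) 2 (μpos q) ≤ C :=
    fun i => norm_bdd (fun n => hg n i) (hinner (c i) (c i))
  induction k with
  | zero =>
    have e1 : stk q r 1 = [0] := by simp [stk, hr0]
    have e2 : wt q lam c r 1 = 1 := by simp [wt, hr0]
    rw [e1, e2]
    refine ⟨q, fun n => f n (c 0), by simp, fun n => rfl, fun n => hg n 0, ?_⟩
    refine tendsto_const_nhds.congr fun n => ?_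
    symm
    rw [← eLpNorm_zero (p := 2) (μ := μpos q) (ε := ℂ)]
    congr 1
    funext t
    have : (fun j : Fin q => pad t (q * 0 + (j:ℕ))) = t := by
      funext j
      rw [mul_zero, zero_add, pad_lt _ j.2]
    simp only [tens, List.length_nil, this, one_mul, Pi.zero_apply, sub_self]
  | succ k ih =>
    have ih := ih (by omega)
    have hw : wt q lam c r (k + 1 + 1) = if r (k + 1) = 0 then wt q lam c r (k + 1) else
      if c (lab q r (k + 1)) = c (k + 1) then
        (if r (k + 1) = q then wt q lam c r (k + 1) * (lam (c (k + 1)) : ℂ) else wt q lam c r (k + 1))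
        else 0 := rfl
    have hs : stk q r (k + 1 + 1) = if r (k + 1) = 0 then (k + 1) :: stk q r (k + 1) else
      if r (k + 1) = q then (stk q r (k + 1)).tail else stk q r (k + 1) := rfl
    generalize wt q lam c r (k + 1) = w at *
    generalize wt q lam c r (k + 1 + 1) = w' at *
    by_cases h0 : r (k + 1) = 0
    · rw [if_pos h0] at hw hs
      rw [hs, hw]
      refine inv_step _ hg hb r w w _ _ k (by omega) (by omega) ?_ ih ?_
      · rw [h0, List.length_cons, mul_add, mul_one]; omega
      · intro d hd
        rw [h0]
        refine tendsto_const_nhds.congr fun n => ?_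
        symm
        rw [← eLpNorm_zero (p := 2) (μ := μpos (d + q - 2 * 0)) (ε := ℂ)]
        congr 1
        funext t
        rw [arc_push (fun j => f n (c j)) _ (k + 1) hd]
        simp
    · obtain ⟨S, hS⟩ := lab_head hv hk h0
      rw [if_neg h0, hS, List.tail_cons] at hs
      rw [if_neg h0] at hw
      rw [hS] at ih
      generalize lab q r (k + 1) = a at *
      have hlen : q * (a :: S).length = q * S.length + q := by
        rw [List.length_cons, mul_add, mul_one]
      by_cases h1 : r (k + 1) = q
      · rw [if_pos h1] at hs hw
        rw [hs]
        refine inv_step _ hg hb r w w' _ _ k (by omega) (by omega) (by omega) ih ?_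
        intro d hd
        rw [h1]
        have hl := hinner (c a) (c (k + 1))
        have := step_full (fun n j => f n (c j)) hg hb S a (k + 1) w _ (hd.trans hlen) (fun n => hsym n _) hl
        convert this using 7
        rw [hw]
        by_cases hc : c a = c (k + 1)
        · rw [if_pos hc, if_pos hc, hc]
        · rw [if_neg hc, if_neg hc, mul_zero]
      · have h2 : r (k + 1) = q / 2 := by
          rcases hv.vals (k + 1) hk with h | h | h
          · exact absurd h h0
          · exact h
          · exact absurd h h1
        rw [if_neg h1] at hs hw
        rw [hs]
        refine inv_step _ hg hb r w w' _ _ k (by omega) (by omega) (by omega) ih ?_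
        intro d hd
        rw [h2]
        by_cases hc : c a = c (k + 1)
        · rw [if_pos hc] at hw
          rw [hw]
          refine step_half_same (fun n j => f n (c j)) hg hb hqe hh S a (k + 1) w (hd.trans hlen) ?_
          simp only [hc]
          exact hdiag _
        · rw [if_neg hc] at hw
          rw [hw]
          exact step_half_diff (fun n j => f n (c j)) hg hb hqe hh S _ a (k + 1) w (hd.trans hlen)
            (hoff _ _ hc _ (by omega) (by omega))

open scoped Classical in
/-- the sum over `D_m` of the scalar iterated contractions converges to
`Σ_{π ∈ NC_{≥2}(m), π ≤ χ} Π_{V ∈ π} λ_{χ(V)}`. -/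
theorem iterated_contraction_Dm_sum_limit (q : ℕ) (hq2 : 2 ≤ q) (hqe : q % 2 = 0)
    (lam : ℕ → ℝ) (hlam : ∀ i, 0 < lam i)
    (f : ℕ → ℕ → (Fin q → ℝ) → ℂ)
    (hmem : ∀ n i, MeasureTheory.MemLp (f n i) 2 (μpos q))
    (hsym : ∀ n i, IsSymmFn q (f n i))
    (hinner : ∀ i j, Filter.Tendsto (fun n => L2inner q (f n i) (f n j)) Filter.atTop
      (nhds (if i = j then (lam i : ℂ) else 0)))
    (hdiag : ∀ i, Filter.Tendsto (fun n => L2norm q (fun t =>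
        reindex (show q + q - 2 * (q / 2) = q by omega)
          (arc q q (q / 2) (f n i) (f n i)) t - f n i t)) Filter.atTop (nhds 0))
    (hdiag' : ∀ i r, 1 ≤ r → r ≤ q - 1 → r ≠ q / 2 →
      Filter.Tendsto (fun n => L2norm (q + q - 2 * r) (arc q q r (f n i) (f n i)))
        Filter.atTop (nhds 0))
    (hoff : ∀ i j, i ≠ j → ∀ r, 1 ≤ r → r ≤ q - 1 →
      Filter.Tendsto (fun n => L2norm (q + q - 2 * r) (arc q q r (f n i) (f n j)))
        Filter.atTop (nhds 0))
    (m : ℕ) (hm : 2 ≤ m) (χ : Fin m → ℕ) :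
    Filter.Tendsto (fun n =>
        ∑ r ∈ Finset.univ.filter (fun r : Fin (m - 1) → Fin (q + 1) => memD16 q m r),
          scalarOf (iterArc q (f n (χ ⟨0, by omega⟩))
            (List.ofFn fun k : Fin (m - 1) =>
              ((r k : ℕ), f n (χ ⟨(k : ℕ) + 1, by omega⟩)))))
      Filter.atTop
      (nhds (∑ P ∈ Finset.univ.filter (fun P : Finset (Finset (Fin m)) => IsNCge2le m χ P),
        ∏ B ∈ P, (lam (B.sup χ) : ℂ))) := by
  rw [← comb_sum hq2 hqe (by omega) lam χ]
  refine tendsto_finsetSum _ fun r hr => ?_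
  have hv := (memD_iff hq2 hqe (by omega) r).1 (Finset.mem_filter.1 hr).2
  obtain ⟨d, F, hd, hacc, -, hlim⟩ := inv_all hq2 hqe (by omega) lam f hmem hsym hinner hdiag hoff (cx χ) (rx r)
    (rx_zero r) hv (m - 1) (by omega)
  have hm1 : m - 1 + 1 = m := by omega
  rw [hm1, hv.fin] at hd hlim
  rw [List.length_nil, mul_zero] at hd
  subst hd
  have hval : ∀ n, scalarOf (iterArc q (f n (χ ⟨0, by omega⟩))
      (List.ofFn fun k : Fin (m - 1) =>
        ((r k : ℕ), f n (χ ⟨(k : ℕ) + 1, by omega⟩)))) = F n (fun _ => 0) := by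
    intro n
    have e := iterArc_ofFn q (fun j => f n (cx χ j)) (rx r) (m - 1)
    rw [hacc n] at e
    have e1 : cx χ 0 = χ ⟨0, by omega⟩ := by rw [cx, dif_pos]
    have e2 : (fun k : Fin (m - 1) => (rx r ((k:ℕ) + 1), f n (cx χ ((k:ℕ) + 1)))) =
        fun k : Fin (m - 1) => ((r k : ℕ), f n (χ ⟨(k : ℕ) + 1, by omega⟩)) := by
      funext k
      rw [rx_succ, cx, dif_pos (by omega)]
    rw [e2, e1] at e
    rw [e, scalarOf]
  simp only [hval]
  simp only [eLpNorm_zero_dim, tens, mul_one] at hlim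
  rw [tendsto_iff_edist_tendsto_0]
  simpa only [edist_eq_enorm_sub] using hlim

end
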